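/- Let k be a field and T an indeterminate. Then every finite embedding problem over the rational function field k(T) has a regular solution. Explicitly: let G be a finite group, L a finite separable extension of k(T), and α : G → Aut(L/k(T)) a surjective group homomorphism. Then there exist a finite separable extension E of k(T) with L ⊆ E such that every element of E that is algebraic over k lies in L (i.e., E ∩ k̄ = L ∩ k̄) and an isomorphism β : Aut(E/k(T)) → G such that every σ ∈ Aut(E/k(T)) maps L onto itself and σ|_L = α(β(σ)). -/

import Mathlib

set_option synthInstance.maxHeartbeats 1000000
set_option maxHeartbeats 1000000

/-!
Both steps of the construction adjoin to `L` a finite set `S` of separable elements. They are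
controlled by embeddings of `A` in an algebraic closure of `κ⸨X⸩`, where `κ` is an algebraic closure
of `k`, which extend the Taylor expansion `k[X] → κ⟦X⟧` at a point `t`. For all but finitely many
`t` the elements of `L` become Laurent series, and so do all constants algebraic over `k`.
Therefore, if the automorphisms of `A` fixing every element that becomes a Laurent series at a place
already move `S` as prescribed, then the action of `G` extends to `L(S)` and `L(S) / L` is regular.

The first step makes the action of `G` faithful. Take for `S` the roots of `X ^ n + c X ^ 2 + d`,
with `n` a large prime and `c, d ∈ k[X]` chosen such that this polynomial is Eisenstein at one
point, and has at another point all but two, but not all, of its roots in the field of Laurent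
series. Its Galois group is then transitive of prime degree and contains a transposition, so `G`
may act on `S` through any embedding in the symmetric group.

The second step makes the action exhaust the automorphisms. Let `x` generate the fixed field of `G`
and vanish at a place above `t₀` at which no other conjugate of `x` vanishes. Adjoin a root `w` of
`a w ^ (r + 1) (w + 1) = x ^ (r + 1)`, where `a ∈ k[X]` has a zero of order `r` at `t₀` and a simple
zero at `t₁`. At `t₀` this equation has exactly one Laurent series solution, but none once `x` is
replaced by another conjugate, so every automorphism of `L(w)` fixes `x` and `w` and hence comes
from `G`. At `t₁` the element `w⁻¹` is a root of an Eisenstein trinomial, so `L(w) / L` is regular.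
-/

section FieldTheory

open IntermediateField

variable {K A : Type*} [Field K] [Field A] [Algebra K A]

theorem exists_mem_fixingSubgroup_apply_eq [Normal K A] {L : IntermediateField K A} {x y : A}
    (h : minpoly L x = minpoly L y) : ∃ σ ∈ L.fixingSubgroup, σ x = y := by
  obtain ⟨σ, hσ⟩ := isConjRoot_iff_exists_algEquiv.1 (show IsConjRoot L y x from h.symm)
  refine ⟨σ.restrictScalars K, ?_, hσ⟩
  exact (IntermediateField.mem_fixingSubgroup_iff _ _).2 fun z hz ↦ σ.commutes ⟨z, hz⟩

theorem exists_mem_fixingSubgroup_apply_ne [Normal K A] {L : IntermediateField K A} {x : A}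
    (hx : IsSeparable K x) (hxL : x ∉ L) : ∃ σ ∈ L.fixingSubgroup, σ x ≠ x := by
  obtain ⟨y, hy, hconj⟩ := (notMem_iff_exists_ne_and_isConjRoot (hx.tower_top L)
    (Normal.splits inferInstance x)).1 fun h ↦ hxL <| by
      obtain ⟨z, rfl⟩ := Algebra.mem_bot.1 h
      exact z.2
  obtain ⟨σ, hσ, rfl⟩ := exists_mem_fixingSubgroup_apply_eq hconj
  exact ⟨σ, hσ, hy.symm⟩

theorem isSeparable_of_mem {L : IntermediateField K A} [Algebra.IsSeparable K L] {x : A}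
    (hx : x ∈ L) : IsSeparable K x :=
  IsSeparable.map (x := (⟨x, hx⟩ : L)) L.val L.val.injective (Algebra.IsSeparable.isSeparable K _)

theorem mem_sup_adjoin {L : IntermediateField K A} {S : Set A} {x : A} (hx : x ∈ S) :
    x ∈ L ⊔ adjoin K S :=
  le_sup_right (a := L) (subset_adjoin K S hx)

theorem eqOn_sup_adjoin {L : IntermediateField K A} {S : Set A} {σ τ : Gal(A/K)}
    (hL : Set.EqOn σ τ L) (hS : Set.EqOn σ τ S) :
    Set.EqOn σ τ (L ⊔ adjoin K S : IntermediateField K A) := by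
  let E : IntermediateField K A := ((σ : A →+* A).eqLocusField (τ : A →+* A)).toIntermediateField
    fun x ↦ (σ.commutes x).trans (τ.commutes x).symm
  have hle : L ⊔ adjoin K S ≤ E := sup_le hL (adjoin_le_iff.2 hS)
  exact hle

theorem exists_monoidHom_apply_eq {G : Type*} [Group G] (E : IntermediateField K A)
    (τ : G → Gal(A/K)) (hE : ∀ g, E ≤ E.comap (τ g).toAlgHom)
    (hmul : ∀ g h, Set.EqOn (τ (g * h)) (τ g * τ h : Gal(A/K)) E) :
    ∃ φ : G →* Gal(E/K), ∀ g x, (φ g x : A) = τ g x := by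
  have hone : ∀ x ∈ E, τ 1 x = x := fun x hx ↦ (τ 1).injective <| by
    rw [← AlgEquiv.mul_apply, ← hmul 1 1 hx, mul_one]
  let f : G →* (E →ₐ[K] E) :=
    { toFun g := ((τ g).toAlgHom.comp E.val).codRestrict E.toSubalgebra fun x ↦ hE g x.2
      map_one' := by
        ext x
        exact hone x x.2
      map_mul' g h := by
        ext x
        exact hmul g h x.2 }
  exact ⟨(AlgEquiv.algHomUnitsEquiv K E).toMonoidHom.comp f.toHomUnits, fun _ _ ↦ rfl⟩

/-- `φ` lifts `α`: the action of `G` on `E` through `φ` restricts on `L` to the action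
through `α`. -/
def IsLift {G : Type*} [Group G] {L E : IntermediateField K A} (hLE : L ≤ E)
    (α : G →* Gal(L/K)) (φ : G →* Gal(E/K)) : Prop :=
  ∀ g x, φ g (inclusion hLE x) = inclusion hLE (α g x)

theorem IsLift.trans {G : Type*} [Group G] {L E F : IntermediateField K A} {hLE : L ≤ E}
    {hEF : E ≤ F} {α : G →* Gal(L/K)} {φ : G →* Gal(E/K)} {ψ : G →* Gal(F/K)}
    (hφ : IsLift hLE α φ) (hψ : IsLift hEF φ ψ) : IsLift (hLE.trans hEF) α ψ := fun g x ↦ by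
  rw [← inclusion_inclusion hLE hEF, hψ, hφ, inclusion_inclusion]

theorem IsLift.injective {G : Type*} [Group G] {L E : IntermediateField K A} {hLE : L ≤ E}
    {α : G →* Gal(L/K)} {φ : G →* Gal(E/K)} (hφ : IsLift hLE α φ)
    (hα : Function.Injective α) : Function.Injective φ := fun g h hgh ↦ hα <| by
  refine AlgEquiv.ext fun x ↦ inclusion_injective hLE ?_
  rw [← hφ, ← hφ, hgh]

/-- `E/K` is a finite separable extension containing `L` in which the elements algebraic over
the constant field `k` all lie in `L`; that is, `E ∩ k̄ = L ∩ k̄`. -/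
structure IsRegularExtension (k : Type*) [Field k] [Algebra k A] (L E : IntermediateField K A) :
    Prop where
  le : L ≤ E
  finiteDimensional : FiniteDimensional K E
  isSeparable : Algebra.IsSeparable K E
  mem_of_isAlgebraic : ∀ x ∈ E, IsAlgebraic k x → x ∈ L

theorem IsRegularExtension.trans {k : Type*} [Field k] [Algebra k A]
    {L E F : IntermediateField K A} (hLE : IsRegularExtension k L E)
    (hEF : IsRegularExtension k E F) : IsRegularExtension k L F where
  le := hLE.le.trans hEF.le
  finiteDimensional := hEF.finiteDimensional
  isSeparable := hEF.isSeparable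
  mem_of_isAlgebraic x hx hk := hLE.mem_of_isAlgebraic x (hEF.mem_of_isAlgebraic x hx hk) hk

theorem isRegularExtension_sup_adjoin {k : Type*} [Field k] [Algebra k A] [Normal K A]
    {L Λ : IntermediateField K A} [FiniteDimensional K L] [Algebra.IsSeparable K L]
    (hLΛ : L ≤ Λ) (hkΛ : ∀ x : A, IsAlgebraic k x → x ∈ Λ)
    {S : Set A} [Finite S] (hS : ∀ x ∈ S, IsSeparable K x)
    (h : ∀ σ ∈ L.fixingSubgroup, ∃ τ ∈ Λ.fixingSubgroup, Set.EqOn σ τ S) :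
    IsRegularExtension k L (L ⊔ adjoin K S) := by
  have hfin : FiniteDimensional K (adjoin K S) :=
    finiteDimensional_adjoin fun x hx ↦ (hS x hx).isIntegral
  have hadj : Algebra.IsSeparable K (adjoin K S) :=
    (isSeparable_adjoin_iff_isSeparable K A).2 hS
  have hsep : Algebra.IsSeparable K (L ⊔ adjoin K S : IntermediateField K A) :=
    isSeparable_sup K A L (adjoin K S)
  refine ⟨le_sup_left, finiteDimensional_sup L (adjoin K S), hsep, fun x hx hxk ↦ ?_⟩
  by_contra hxL
  obtain ⟨σ, hσ, hσx⟩ := exists_mem_fixingSubgroup_apply_ne (isSeparable_of_mem hx) hxL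
  obtain ⟨τ, hτ, hστ⟩ := h σ hσ
  rw [IntermediateField.mem_fixingSubgroup_iff] at hσ hτ
  have hστL : Set.EqOn σ τ L := fun y hy ↦ (hσ y hy).trans (hτ y (hLΛ hy)).symm
  exact hσx ((eqOn_sup_adjoin hστL hστ hx).trans (hτ x (hkΛ x hxk)))

theorem exists_isLift_sup_adjoin {G : Type*} [Group G] {L : IntermediateField K A} {S : Set A}
    (α : G →* Gal(L/K)) (π : G →* Equiv.Perm S)
    (h : ∀ g, ∃ τ : Gal(A/K), (∀ x : L, τ x = α g x) ∧ ∀ x : S, τ x = π g x) :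
    ∃ φ : G →* Gal((L ⊔ adjoin K S : IntermediateField K A)/K),
      IsLift le_sup_left α φ ∧
      ∀ g (x : S), (φ g ⟨x, mem_sup_adjoin x.2⟩ : A) = π g x := by
  choose τ hτL hτS using h
  have hE (g : G) : L ⊔ adjoin K S ≤ (L ⊔ adjoin K S).comap (τ g).toAlgHom := by
    refine sup_le (fun x hx ↦ ?_) (adjoin_le_iff.2 fun x hx ↦ ?_)
    · exact le_sup_left (a := L) ((hτL g ⟨x, hx⟩).symm ▸ (α g ⟨x, hx⟩).2)
    · exact mem_sup_adjoin ((hτS g ⟨x, hx⟩).symm ▸ (π g ⟨x, hx⟩).2)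
  have hmul (g h : G) :
      Set.EqOn (τ (g * h)) (τ g * τ h : Gal(A/K)) (L ⊔ adjoin K S : IntermediateField K A) := by
    refine eqOn_sup_adjoin (fun x hx ↦ ?_) fun x hx ↦ ?_
    · rw [AlgEquiv.mul_apply, hτL (g * h) ⟨x, hx⟩, hτL h ⟨x, hx⟩, hτL, map_mul]; rfl
    · rw [AlgEquiv.mul_apply, hτS (g * h) ⟨x, hx⟩, hτS h ⟨x, hx⟩, hτS, map_mul]; rfl
  obtain ⟨φ, hφ⟩ := exists_monoidHom_apply_eq _ τ hE hmul
  exact ⟨φ, fun g x ↦ Subtype.ext ((hφ g _).trans (hτL g x)), fun g x ↦ (hφ g _).trans (hτS g x)⟩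

theorem exists_isRegularExtension_isLift {k : Type*} [Field k] [Algebra k A] [Normal K A]
    {G : Type*} [Group G] {L Λ : IntermediateField K A}
    [FiniteDimensional K L] [Algebra.IsSeparable K L]
    (hLΛ : L ≤ Λ) (hkΛ : ∀ x : A, IsAlgebraic k x → x ∈ Λ)
    {S : Set A} [Finite S] (hS : ∀ x ∈ S, IsSeparable K x)
    (α : G →* Gal(L/K)) (π : G →* Equiv.Perm S)
    (h : ∀ (g : G) (σ : Gal(A/K)), (∀ x : L, σ x = α g x) →
      ∃ τ ∈ Λ.fixingSubgroup, ∀ x : S, τ (π g x) = σ x) :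
    ∃ hE : IsRegularExtension k L (L ⊔ adjoin K S),
      ∃ φ : G →* Gal((L ⊔ adjoin K S : IntermediateField K A)/K),
      IsLift hE.le α φ ∧
      ∀ g (x : S), (φ g ⟨x, mem_sup_adjoin x.2⟩ : A) = π g x := by
  have hreg : IsRegularExtension k L (L ⊔ adjoin K S) := by
    refine isRegularExtension_sup_adjoin hLΛ hkΛ hS fun σ hσ ↦ ?_
    obtain ⟨τ, hτ, hτσ⟩ := h 1 σ fun x ↦ by
      rw [map_one, AlgEquiv.one_apply, (IntermediateField.mem_fixingSubgroup_iff _ _).1 hσ x x.2]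
    exact ⟨τ, hτ, fun x hx ↦ by simpa using (hτσ ⟨x, hx⟩).symm⟩
  refine ⟨hreg, exists_isLift_sup_adjoin α π fun g ↦ ?_⟩
  have hlift (x : L) : (α g).liftNormal A x = α g x := (α g).liftNormal_commutes A x
  obtain ⟨τ, hτ, hτσ⟩ := h g _ hlift
  rw [IntermediateField.mem_fixingSubgroup_iff] at hτ
  refine ⟨τ⁻¹ * (α g).liftNormal A, fun x ↦ ?_, fun x ↦ ?_⟩
  · rw [AlgEquiv.mul_apply, hlift, AlgEquiv.aut_inv, AlgEquiv.symm_apply_eq, hτ _ (hLΛ (α g x).2)]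
  · rw [AlgEquiv.mul_apply, ← hτσ, AlgEquiv.aut_inv, AlgEquiv.symm_apply_apply]

theorem exists_apply_eq_of_forall_fixed {G : Type*} [Group G] {E : IntermediateField K A}
    [FiniteDimensional K E] (φ : G →* Gal(E/K)) {σ : Gal(A/K)}
    (hσ : ∀ x : E, (∀ g, φ g x = x) → σ x = x) : ∃ g, ∀ x : E, σ x = φ g x := by
  let F := fixedField φ.range
  have : Normal F E := (IsGalois.of_fixed_field E φ.range).to_normal
  let σF : A ≃ₐ[F] A := AlgEquiv.ofRingEquiv (f := (σ : A ≃+* A)) fun x ↦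
    hσ x fun g ↦ x.2 ⟨φ g, g, rfl⟩
  let ρ : E ≃ₐ[F] E := σF.restrictNormal E
  have hρ : ρ.restrictScalars K ∈ F.fixingSubgroup :=
    (IntermediateField.mem_fixingSubgroup_iff _ _).2 fun x hx ↦ ρ.commutes ⟨x, hx⟩
  rw [fixingSubgroup_fixedField] at hρ
  obtain ⟨g, hg⟩ := hρ
  refine ⟨g, fun x ↦ ?_⟩
  rw [hg]
  exact (σF.restrictNormal_commutes E x).symm

end FieldTheory

section Perm

open MulAction

theorem toPermHom_surjective_of_prime_card {G X : Type*} [Group G] [MulAction G X] [Finite X]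
    [IsPretransitive G X] (hX : (Nat.card X).Prime) {g : G} {x : X} (hg : g • x ≠ x)
    (hfix : (fixedBy X g)ᶜ.ncard ≤ 2) : Function.Surjective (toPermHom G X) := by
  classical
  have := Fintype.ofFinite X
  have hrange : (toPermHom G X).range = ⊤ := by
    have : IsPretransitive (toPermHom G X).range X := ⟨fun x y ↦ by
      obtain ⟨g, hg⟩ := exists_smul_eq G x y
      exact ⟨⟨_, g, rfl⟩, hg⟩⟩
    have hprim : IsPreprimitive (toPermHom G X).range X := .of_prime_card hX
    refine Equiv.Perm.subgroup_eq_top_of_isPreprimitive_of_isSwap_mem hprim (toPermHom G X g) ?_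
      ⟨g, rfl⟩
    have hsupp : (toPermHom G X g).support.card = (fixedBy X g)ᶜ.ncard := by
      rw [← Set.ncard_coe_finset]
      congr 1
      ext y
      simp
    refine Equiv.Perm.card_support_eq_two.1 (le_antisymm (hsupp ▸ hfix) ?_)
    exact Equiv.Perm.one_lt_card_support_of_ne_one fun h ↦ hg (congrArg (· x) h)
  exact MonoidHom.range_eq_top.1 hrange

end Perm

section LocalAlgebra

open Polynomial

universe u

variable {R : Type u} [CommRing R]

theorem eq_of_isRoot_of_map_eq [IsDomain R] {κ : Type*} [CommRing κ] {φ : R →+* κ} {P : R[X]}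
    {x y : R} (hx : P.IsRoot x) (hy : P.IsRoot y) (hxy : φ x = φ y)
    (hd : (P.map φ).derivative.eval (φ x) ≠ 0) : x = y := by
  obtain ⟨c, hc⟩ := P.binomExpansion x (y - x)
  rw [add_sub_cancel, hx, hy] at hc
  have hprod : (y - x) * (P.derivative.eval x + c * (y - x)) = 0 := by linear_combination -hc
  rcases mul_eq_zero.1 hprod with h | h
  · exact (sub_eq_zero.1 h).symm
  · refine absurd ?_ hd
    rw [derivative_map, eval_map_apply]
    simpa [hxy] using congrArg φ h

section Henselian

variable {κ : Type u} [Field κ] {φ : R →+* κ}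

theorem exists_isRoot_of_henselian [HenselianLocalRing R] (hφ : Function.Surjective φ)
    {P : R[X]} (hP : P.Monic) {a : κ} (ha : (P.map φ).IsRoot a)
    (hd : (P.map φ).derivative.eval a ≠ 0) : ∃ r, P.IsRoot r ∧ φ r = a := by
  have h := ((HenselianLocalRing.TFAE R).out 0 2).1 ‹_›
  exact h φ hφ P hP a (by rwa [← eval_map]) (by rwa [← eval_map, ← derivative_map])

theorem exists_finset_isRoot_of_henselian [HenselianLocalRing R] (hφ : Function.Surjective φ)
    {P : R[X]} (hP : P.Monic) (s : Finset κ)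
    (hs : ∀ a ∈ s, (P.map φ).IsRoot a ∧ (P.map φ).derivative.eval a ≠ 0) :
    ∃ t : Finset R, t.card = s.card ∧ ∀ r ∈ t, P.IsRoot r := by
  classical
  choose r hr hra using fun a : s ↦ exists_isRoot_of_henselian hφ hP (hs a a.2).1 (hs a a.2).2
  have hinj : Function.Injective r := fun a b h ↦ Subtype.ext (by rw [← hra a, ← hra b, h])
  refine ⟨s.attach.image r, by rw [Finset.card_image_of_injective _ hinj, Finset.card_attach], ?_⟩
  rintro x hx
  obtain ⟨a, -, rfl⟩ := Finset.mem_image.1 hx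
  exact hr a

theorem splits_of_splits_map_of_separable [IsDomain R] [HenselianLocalRing R]
    (hφ : Function.Surjective φ) {P : R[X]} (hP : P.Monic) (hsplit : (P.map φ).Splits)
    (hsep : (P.map φ).Separable) : P.Splits := by
  classical
  have hroot {a : κ} (ha : a ∈ (P.map φ).roots.toFinset) : (P.map φ).IsRoot a :=
    isRoot_of_mem_roots (Multiset.mem_toFinset.1 ha)
  obtain ⟨t, htcard, ht⟩ := exists_finset_isRoot_of_henselian hφ hP (P.map φ).roots.toFinset
    fun a ha ↦ ⟨hroot ha, hsep.eval₂_derivative_ne_zero (RingHom.id κ) (hroot ha)⟩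
  have hle : t.val ≤ P.roots :=
    (Multiset.le_iff_subset t.nodup).2 fun r hr ↦ (mem_roots hP.ne_zero).2 (ht r hr)
  refine splits_iff_card_roots.2 (le_antisymm (card_roots' P) ?_)
  rw [← hP.natDegree_map φ, hsplit.natDegree_eq_card_roots,
    ← Multiset.toFinset_card_of_nodup (nodup_roots hsep), ← htcard]
  exact Multiset.card_le_card hle

end Henselian

theorem exists_isRoot_algebraMap_eq [IsDomain R] {B : Type*} [CommRing B] [IsDomain B]
    [Algebra R B] {P : R[X]} (hP : P.Monic) (hs : P.Splits) {y : B} (hy : aeval y P = 0) :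
    ∃ r, P.IsRoot r ∧ algebraMap R B r = y := by
  have hy' : y ∈ (P.map (algebraMap R B)).roots :=
    (mem_roots (hP.map _).ne_zero).2 (by rwa [IsRoot, eval_map_algebraMap])
  rw [hs.roots_map_of_ne_zero (hP.map _).ne_zero, Multiset.mem_map] at hy'
  obtain ⟨r, hr, rfl⟩ := hy'
  exact ⟨r, isRoot_of_mem_roots hr, rfl⟩

theorem splits_of_forall_mem_range [IsIntegrallyClosed R] {C B : Type*} [Field C]
    [Algebra R C] [IsFractionRing R C] [Field B] [IsAlgClosed B] [Algebra C B] [Algebra R B]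
    [IsScalarTower R C B] {P : R[X]} (hP : P.Monic)
    (h : ∀ y : B, aeval y P = 0 → y ∈ (algebraMap C B).range) : P.Splits := by
  have hinj : Function.Injective (algebraMap R B) := by
    rw [IsScalarTower.algebraMap_eq R C B]
    exact (algebraMap C B).injective.comp (IsFractionRing.injective R C)
  refine Splits.of_splits_map_of_injective hinj (IsAlgClosed.splits _) fun y hy ↦ ?_
  have hy : aeval y P = 0 := by
    rw [← eval_map_algebraMap]
    exact isRoot_of_mem_roots hy
  obtain ⟨z, rfl⟩ := h y hy
  have hz : IsIntegral R z :=
    (isIntegral_algHom_iff (IsScalarTower.toAlgHom R C B) (algebraMap C B).injective).1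
      ⟨P, hP, hy⟩
  obtain ⟨r, rfl⟩ := IsIntegrallyClosed.isIntegral_iff.1 hz
  exact ⟨r, IsScalarTower.algebraMap_apply R C B r⟩

theorem natDegree_minpoly_of_isEisensteinAt [IsDomain R] [IsIntegrallyClosed R] {C B : Type*}
    [Field C] [Algebra R C] [IsFractionRing R C] [Field B] [Algebra C B] [Algebra R B]
    [IsScalarTower R C B] {P : R[X]} {𝓟 : Ideal R} (hE : P.IsEisensteinAt 𝓟) (h𝓟 : 𝓟.IsPrime)
    (hP : P.Monic) (hdeg : 0 < P.natDegree) {y : B} (hy : aeval y P = 0) :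
    (minpoly C y).natDegree = P.natDegree := by
  have hirr := hE.irreducible h𝓟 hP.isPrimitive hdeg
  rw [hP.irreducible_iff_irreducible_map_fraction_map (K := C)] at hirr
  rw [← minpoly.eq_of_irreducible_of_monic hirr (by rwa [aeval_map_algebraMap]) (hP.map _),
    hP.natDegree_map]

open IsLocalRing in
theorem isUnit_add_of_mem_maximalIdeal [IsLocalRing R] {u z : R} (hu : IsUnit u)
    (hz : z ∈ maximalIdeal R) : IsUnit (u + z) := by
  by_contra h
  exact (mem_maximalIdeal u).1 (by simpa using sub_mem ((mem_maximalIdeal _).2 h) hz) hu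

section DiscreteValuationRing

variable [IsDomain R] [IsDiscreteValuationRing R] {C : Type*} [Field C] [Algebra R C]
  [IsFractionRing R C] {ϖ a : R} {r : ℕ}

open IsLocalRing in
theorem mul_pow_mul_add_one_ne_of_isUnit (hϖ : Irreducible ϖ) (ha : Associated a (ϖ ^ r))
    (hr : r ≠ 0) {u : R} (hu : IsUnit u) (w : C) :
    algebraMap R C a * (w ^ (r + 1) * (w + 1)) ≠ algebraMap R C u := by
  have hinj := IsFractionRing.injective R C
  have ham : a ∈ maximalIdeal R := by
    rw [← Ideal.mem_iff_of_associated ha.symm]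
    exact Ideal.pow_mem_of_mem _ ((mem_maximalIdeal _).2 hϖ.not_isUnit) _ (Nat.pos_of_ne_zero hr)
  have hum : u ∉ maximalIdeal R := fun h ↦ (mem_maximalIdeal u).1 h hu
  intro hw
  rcases ValuationRing.isInteger_or_isInteger R w with ⟨v, rfl⟩ | ⟨z, hz⟩
  · have : a * (v ^ (r + 1) * (v + 1)) = u := hinj (by simpa using hw)
    exact hum (this ▸ Ideal.mul_mem_right _ _ ham)
  · have hw0 : w ≠ 0 := by
      rintro rfl
      have : 0 = u := hinj (by simpa using hw)
      exact hum (this ▸ zero_mem _)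
    have hz' : a * (1 + z) = u * z ^ (r + 2) := hinj <| by
      simp only [map_mul, map_add, map_pow, map_one, ← hw, hz, inv_pow]
      field_simp
      ring
    have hzm : z ∈ maximalIdeal R := by
      have : u * z ^ (r + 2) ∈ maximalIdeal R := hz' ▸ Ideal.mul_mem_right _ _ ham
      exact Ideal.IsPrime.mem_of_pow_mem inferInstance _
        ((Ideal.IsPrime.mem_or_mem inferInstance this).resolve_left hum)
    have hzu : IsUnit (1 + z) := isUnit_add_of_mem_maximalIdeal isUnit_one hzm
    have hϖz : ϖ ∣ z := by
      rwa [← Ideal.mem_span_singleton, ← hϖ.maximalIdeal_eq]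
    have hdvd : ϖ ^ (r + 2) ∣ ϖ ^ r := by
      rw [← ha.dvd_iff_dvd_right, ← hzu.dvd_mul_right, hz']
      exact (pow_dvd_pow_of_dvd hϖz _).mul_left _
    exact absurd ((pow_dvd_pow_iff hϖ.ne_zero hϖ.not_isUnit).1 hdvd) (by omega)

theorem isUnit_of_pow_mul_add_one_eq (hϖ : Irreducible ϖ) (hr : r ≠ 0) {f u z : R} (hf : f ≠ 0)
    (hu : IsUnit u) (hz : z ^ (r + 1) * (z + 1) = ϖ * f ^ (r + 1) * u) : IsUnit z := by
  by_contra hzu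
  have hz1 : IsUnit (z + 1) := add_comm 1 z ▸ isUnit_add_of_mem_maximalIdeal isUnit_one hzu
  obtain ⟨g, rfl⟩ : f ∣ z := by
    rw [← IsIntegrallyClosed.pow_dvd_pow_iff r.succ_ne_zero, ← hz1.dvd_mul_right, hz]
    exact ((dvd_refl _).mul_left ϖ).mul_right u
  have hg : g ^ (r + 1) * (f * g + 1) = ϖ * u :=
    mul_left_cancel₀ (pow_ne_zero (r + 1) hf) (by linear_combination hz)
  have hϖg : ϖ ∣ g := by
    refine hϖ.prime.dvd_of_dvd_pow (n := r + 1) (hz1.dvd_mul_right.1 ?_)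
    exact hg ▸ dvd_mul_right ϖ u
  have hdvd : ϖ ^ (r + 1) ∣ ϖ ^ 1 := by
    rw [pow_one, ← hu.dvd_mul_right, ← hg]
    exact (pow_dvd_pow_of_dvd hϖg _).mul_right _
  exact hr (by simpa using (pow_dvd_pow_iff hϖ.ne_zero hϖ.not_isUnit).1 hdvd)

open IsLocalRing in
theorem existsUnique_pow_mul_add_one_eq [HenselianLocalRing R] (hϖ : Irreducible ϖ) (hr : r ≠ 0)
    {f u : R} (hf : f ≠ 0) (hu : IsUnit u) :
    ∃! w : C, w ^ (r + 1) * (w + 1) = algebraMap R C (ϖ * f ^ (r + 1) * u) := by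
  set c := ϖ * f ^ (r + 1) * u
  set P : R[X] := trinomial 0 (r + 1) (r + 2) (-c) 1 1 with hP
  have hPmonic : P.Monic := trinomial_monic r.succ_pos (by omega)
  have hPeval (z : R) : P.IsRoot z ↔ z ^ (r + 1) * (z + 1) = c := by
    rw [IsRoot, hP, trinomial_def, ← sub_eq_zero (b := c)]
    simp only [eval_add, eval_mul, eval_C, eval_pow, eval_X]
    ring_nf
  have hcm : residue R c = 0 := (residue_eq_zero_iff c).2 <|
    Ideal.mul_mem_right _ _ (Ideal.mul_mem_right _ _ hϖ.not_isUnit)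
  have hPmap : P.map (residue R) = X ^ (r + 2) + X ^ (r + 1) := by
    simp [hP, trinomial_def, hcm, add_comm]
  have hroot : (P.map (residue R)).IsRoot (-1) := by
    simp [hPmap, pow_succ]
  have hder : (P.map (residue R)).derivative.eval (-1) ≠ 0 := by
    have : (P.map (residue R)).derivative.eval (-1) = -(-1) ^ r := by
      simp [hPmap]
      ring
    rw [this]
    simp
  obtain ⟨v, hv, hv1⟩ := exists_isRoot_of_henselian residue_surjective hPmonic hroot hder
  refine ⟨algebraMap R C v, by simp [← (hPeval v).1 hv], fun w hw ↦ ?_⟩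
  obtain ⟨z, rfl⟩ : ∃ z, algebraMap R C z = w := by
    refine IsIntegrallyClosed.isIntegral_iff.1 ⟨P, hPmonic, ?_⟩
    simp only [hP, trinomial_def, C_neg, eval₂_add, eval₂_mul, eval₂_neg, eval₂_C, eval₂_pow,
      eval₂_X, eval₂_one, map_one, pow_zero]
    linear_combination (hw : w ^ (r + 1) * (w + 1) = _)
  have hz : z ^ (r + 1) * (z + 1) = c := IsFractionRing.injective R C (by simpa using hw)
  have hz1 : residue R z = -1 := by
    have h := congrArg (residue R) hz
    rw [hcm, map_mul, map_pow, map_add, map_one] at h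
    have hz0 : residue R z ≠ 0 :=
      (residue_ne_zero_iff_isUnit z).2 (isUnit_of_pow_mul_add_one_eq hϖ hr hf hu hz)
    exact eq_neg_of_add_eq_zero_left ((mul_eq_zero.1 h).resolve_left (pow_ne_zero _ hz0))
  rw [eq_of_isRoot_of_map_eq ((hPeval z).2 hz) hv (hz1.trans hv1.symm) (hz1 ▸ hder)]

theorem existsUnique_mul_pow_mul_add_one_eq [HenselianLocalRing R] (hϖ : Irreducible ϖ)
    (ha : Associated a (ϖ ^ r)) (hr : r ≠ 0) {e : R} (he : ϖ ∣ e) (he0 : e ≠ 0) :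
    ∃! w : C, algebraMap R C a * (w ^ (r + 1) * (w + 1)) = algebraMap R C (e ^ (r + 1)) := by
  obtain ⟨f, rfl⟩ := he
  obtain ⟨u, hu⟩ := ha
  have hC (w : C) : algebraMap R C a * (w ^ (r + 1) * (w + 1)) =
      algebraMap R C ((ϖ * f) ^ (r + 1)) ↔
      w ^ (r + 1) * (w + 1) = algebraMap R C (ϖ * f ^ (r + 1) * u) := by
    have ha0 : algebraMap R C a ≠ 0 := by
      rw [Ne, map_eq_zero_iff _ (IsFractionRing.injective R C)]
      rintro rfl
      exact pow_ne_zero r hϖ.ne_zero (by rw [← hu, zero_mul])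
    have hau : (ϖ * f) ^ (r + 1) = a * (ϖ * f ^ (r + 1) * u) := by
      linear_combination (-ϖ * f ^ (r + 1)) * hu
    rw [hau, map_mul, mul_right_inj' ha0]
  simp only [hC]
  exact existsUnique_pow_mul_add_one_eq hϖ hr (right_ne_zero_of_mul he0) u.isUnit

end DiscreteValuationRing

end LocalAlgebra

section PrimitiveElement

open IntermediateField

theorem exists_isIntegral_adjoin_eq (R : Type*) {K A : Type*} [CommRing R] [IsDomain R] [Field K]
    [Field A] [Algebra R K] [IsFractionRing R K] [Algebra K A] [Algebra R A] [IsScalarTower R K A]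
    (F : IntermediateField K A) [FiniteDimensional K F] [Algebra.IsSeparable K F] :
    ∃ b : A, b ≠ 0 ∧ IsIntegral R b ∧ adjoin K {b} = F := by
  obtain ⟨b, hb0, hb⟩ : ∃ b : F, b ≠ 0 ∧ adjoin K {b} = ⊤ := by
    obtain ⟨b, hb⟩ := Field.exists_primitive_element K F
    rcases eq_or_ne b 0 with rfl | hb0
    · exact ⟨1, one_ne_zero, by rw [← hb, adjoin_zero, adjoin_one]⟩
    · exact ⟨b, hb0, hb⟩
  have hbF : adjoin K {(b : A)} = F := by
    simpa only [lift_adjoin_simple, lift_top] using congrArg lift hb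
  have halg : IsAlgebraic R (b : A) := (IsFractionRing.isAlgebraic_iff R K A).2
    ((Algebra.IsAlgebraic.isAlgebraic (R := K) b).algebraMap (A := A))
  obtain ⟨y, hy0, hy⟩ := halg.exists_integral_multiple
  have hyK : algebraMap R K y ≠ 0 :=
    (map_ne_zero_iff _ (IsFractionRing.injective R K)).2 hy0
  rw [← algebraMap_smul K y (b : A)] at hy
  refine ⟨algebraMap R K y • b, smul_ne_zero hyK (by simpa using hb0), hy, ?_⟩
  refine le_antisymm (adjoin_simple_le_iff.2 (F.smul_mem b.2)) ?_
  refine hbF.ge.trans (adjoin_simple_le_iff.2 ?_)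
  nth_rw 2 [← inv_smul_smul₀ hyK (b : A)]
  exact smul_mem _ (mem_adjoin_simple_self K _)

end PrimitiveElement

section Trinomial

open Polynomial

universe u

variable {R : Type u} [CommRing R]

theorem trinomial_map {S : Type*} [CommRing S] (f : R →+* S) (k m n : ℕ) (u v w : R) :
    (trinomial k m n u v w).map f = trinomial k m n (f u) (f v) (f w) := by
  simp [trinomial_def]

theorem isEisensteinAt_trinomial {𝓟 : Ideal R} (h𝓟 : 𝓟 ≠ ⊤) {m n : ℕ} (hm : 0 < m) (hmn : m < n)
    {c d : R} (hc : c ∈ 𝓟) (hd : d ∈ 𝓟) (hd2 : d ∉ 𝓟 ^ 2) :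
    (trinomial 0 m n d c 1).IsEisensteinAt 𝓟 := by
  have : Nontrivial R := (Submodule.nontrivial_iff R).1 ⟨_, _, h𝓟⟩
  have hcoeff (i : ℕ) : (trinomial 0 m n d c 1).coeff i =
      (if i = 0 then d else 0) + (if i = m then c else 0) + if i = n then 1 else 0 := by
    simp only [trinomial_def, coeff_add, coeff_C_mul, coeff_X_pow, mul_ite, mul_one, mul_zero]
  refine ⟨?_, fun {i} hi ↦ ?_, ?_⟩
  · rwa [trinomial_leadingCoeff hm hmn one_ne_zero, ← Ideal.ne_top_iff_one]
  · rw [trinomial_natDegree hm hmn one_ne_zero] at hi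
    rw [hcoeff, if_neg hi.ne, add_zero]
    exact add_mem (by split_ifs <;> simp [hd]) (by split_ifs <;> simp [hc])
  · rwa [trinomial_trailing_coeff' hm hmn]

theorem exists_finset_isRoot_trinomial [HenselianLocalRing R] {κ : Type u} [Field κ]
    [IsAlgClosed κ] {φ : R →+* κ} (hφ : Function.Surjective φ) {m : ℕ} (hm : (m : κ) ≠ 0)
    {c d : R} (hc : φ c ≠ 0) (hd : φ d = 0) :
    ∃ t : Finset R, t.card = m ∧ ∀ r ∈ t, (trinomial 0 2 (m + 2) d c 1).IsRoot r := by
  classical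
  have hm0 : m ≠ 0 := by
    rintro rfl
    exact hm Nat.cast_zero
  set s := (X ^ m - C (-φ c)).roots.toFinset
  have hs : s.card = m := by
    rw [Multiset.toFinset_card_of_nodup
        (nodup_roots (separable_X_pow_sub_C _ hm (neg_ne_zero.2 hc))),
      ← (IsAlgClosed.splits _).natDegree_eq_card_roots, natDegree_X_pow_sub_C]
  have hmap : (trinomial 0 2 (m + 2) d c 1).map φ = X ^ (m + 2) + C (φ c) * X ^ 2 := by
    rw [trinomial_map, hd, trinomial_def]
    simp [add_comm]
  suffices h : ∀ a ∈ s, ((trinomial 0 2 (m + 2) d c 1).map φ).IsRoot a ∧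
      ((trinomial 0 2 (m + 2) d c 1).map φ).derivative.eval a ≠ 0 by
    simpa only [hs] using
      exists_finset_isRoot_of_henselian hφ (trinomial_monic two_pos (by omega)) s h
  intro a ha
  have ham : a ^ m = -φ c := by
    simpa [sub_eq_zero, eq_neg_iff_add_eq_zero] using
      isRoot_of_mem_roots (Multiset.mem_toFinset.1 ha)
  have ha0 : a ≠ 0 := by
    rintro rfl
    exact hc (by simpa [zero_pow hm0] using ham.symm)
  have hder : (X ^ (m + 2) + C (φ c) * X ^ 2 : κ[X]).derivative.eval a = m * (-φ c) * a := by
    simp only [derivative_add, derivative_X_pow, derivative_mul, derivative_C, eval_add, eval_mul,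
      eval_C, eval_pow, eval_X, map_natCast, eval_natCast, Nat.cast_add, zero_mul, zero_add]
    simp only [← ham, pow_succ]
    push_cast
    linear_combination (2 * a) * ham
  rw [hmap, hder]
  exact ⟨by simp [pow_add, ham], mul_ne_zero (mul_ne_zero hm (neg_ne_zero.2 hc)) ha0⟩

theorem exists_aeval_trinomial_eq_zero_notMem_range [IsDomain R] [IsIntegrallyClosed R] (C : Type*)
    {B : Type*} [Field C] [Algebra R C] [IsFractionRing R C] [Field B] [IsAlgClosed B]
    [Algebra C B] [Algebra R B] [IsScalarTower R C B] {𝓟 : Ideal R} [𝓟.IsPrime] {m : ℕ}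
    (c : R) {d : R} (hd : d ∈ 𝓟) (hd2 : d ∉ 𝓟 ^ 2) :
    ∃ y : B, aeval y (trinomial 0 2 (m + 3) d c 1) = 0 ∧ y ∉ (algebraMap C B).range := by
  set P := trinomial 0 2 (m + 3) d c 1 with hP
  have hmonic : P.Monic := trinomial_monic two_pos (by omega)
  by_contra! hcon
  have hsplit : P.Splits := splits_of_forall_mem_range (C := C) hmonic hcon
  have h0 : (P.roots.map fun r ↦ 0 - r).prod = d := by
    rw [← hsplit.eval_eq_prod_roots_of_monic hmonic]
    simp [hP, trinomial_def]
  obtain ⟨r, hr, hr𝓟⟩ : ∃ r ∈ P.roots, r ∈ 𝓟 := by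
    obtain ⟨_, hx, hx𝓟⟩ := (‹𝓟.IsPrime›.multiset_prod_mem_iff_exists_mem _).1 (h0 ▸ hd)
    obtain ⟨r, hr, rfl⟩ := Multiset.mem_map.1 hx
    exact ⟨r, hr, by simpa using hx𝓟⟩
  have hroot : d = r ^ 2 * -(c + r ^ (m + 1)) := by
    have := isRoot_of_mem_roots hr
    simp only [hP, trinomial_def, IsRoot, eval_add, eval_mul, eval_C, eval_pow, eval_X] at this
    linear_combination this
  exact hd2 (hroot ▸ Ideal.mul_mem_right _ _ (Ideal.pow_mem_pow hr𝓟 2))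

end Trinomial

section Places

open Polynomial
open scoped PowerSeries LaurentSeries

instance {κ : Type*} [Field κ] : HenselianLocalRing κ⟦X⟧ where
  is_henselian := by
    rw [PowerSeries.maximalIdeal_eq_span_X]
    exact fun f hf a ha hda ↦ HenselianRing.is_henselian f hf a ha (hda.map _)

theorem algebraMap_powerSeries_injective (κ : Type*) [Field κ] :
    Function.Injective (algebraMap κ⟦X⟧ (AlgebraicClosure κ⸨X⸩)) := by
  rw [IsScalarTower.algebraMap_eq κ⟦X⟧ κ⸨X⸩]
  exact (algebraMap κ⸨X⸩ _).injective.comp (IsFractionRing.injective _ _)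

variable (k : Type*) [Field k] {κ : Type*} [Field κ] [Algebra k κ]

/-- Taylor expansion `p(X) ↦ p(t + X)` at a point `t` of an extension `κ` of `k`, as a ring
homomorphism to power series. -/
noncomputable def taylorExpansion (t : κ) : k[X] →+* κ⟦X⟧ :=
  (coeToPowerSeries.ringHom (R := κ)).comp
    ((taylorAlgHom t : κ[X] →ₐ[κ] κ[X]).toRingHom.comp (mapRingHom (algebraMap k κ)))

variable {k}

theorem taylorExpansion_apply (t : κ) (p : k[X]) :
    taylorExpansion k t p = (taylor t (p.map (algebraMap k κ)) : κ[X]) := rfl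

theorem taylorExpansion_C (t : κ) (c : k) :
    taylorExpansion k t (Polynomial.C c) = PowerSeries.C (algebraMap k κ c) := by
  simp [taylorExpansion_apply]

theorem taylorExpansion_injective (t : κ) : Function.Injective (taylorExpansion k t) :=
  fun _ _ h ↦ map_injective _ (algebraMap k κ).injective <|
    taylor_injective t (Polynomial.coe_injective κ h)

theorem constantCoeff_taylorExpansion (t : κ) (p : k[X]) :
    PowerSeries.constantCoeff (taylorExpansion k t p) = aeval t p := by
  rw [taylorExpansion_apply, constantCoeff_coe, taylor_coeff_zero, eval_map_algebraMap]

theorem X_dvd_taylorExpansion_iff {t : κ} {p : k[X]} :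
    PowerSeries.X ∣ taylorExpansion k t p ↔ aeval t p = 0 := by
  rw [PowerSeries.X_dvd_iff, constantCoeff_taylorExpansion]

theorem not_X_sq_dvd_taylorExpansion {t : κ} {p : k[X]} (h : aeval t (derivative p) ≠ 0) :
    ¬ PowerSeries.X ^ 2 ∣ taylorExpansion k t p := fun h2 ↦ h <| by
  rw [← eval_map_algebraMap, ← derivative_map, ← taylor_coeff_one, ← coeff_coe]
  exact PowerSeries.X_pow_dvd_iff.1 h2 1 one_lt_two

/-- A place of a `k[X]`-algebra `A` above the point `t` of `κ ⊇ k`, with values in an algebraic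
closure of `κ⸨X⸩`: a ring homomorphism which on `k[X]` is Taylor expansion at `t`. -/
structure TaylorEmbedding (k A : Type*) {κ : Type*} [Field k] [Field κ] [Algebra k κ] [CommRing A]
    [Algebra k[X] A] (t : κ) where
  hom : A →+* AlgebraicClosure κ⸨X⸩
  hom_algebraMap (p : k[X]) :
    hom (algebraMap k[X] A p) = algebraMap κ⟦X⟧ _ (taylorExpansion k t p)

namespace TaylorEmbedding

theorem nonempty (k A : Type*) [Field k] [Algebra k κ] [CommRing A] [IsDomain A] [Algebra k[X] A]
    [FaithfulSMul k[X] A] [Algebra.IsAlgebraic k[X] A] (t : κ) :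
    Nonempty (TaylorEmbedding k A t) := by
  let _ : Algebra k[X] (AlgebraicClosure κ⸨X⸩) :=
    ((algebraMap κ⟦X⟧ _).comp (taylorExpansion k t)).toAlgebra
  have hinj : Function.Injective (algebraMap k[X] (AlgebraicClosure κ⸨X⸩)) :=
    show Function.Injective (algebraMap κ⟦X⟧ (AlgebraicClosure κ⸨X⸩) ∘ taylorExpansion k t) from
      (algebraMap_powerSeries_injective κ).comp (taylorExpansion_injective t)
  have := Module.isTorsionFree_iff_algebraMap_injective.2 hinj
  let f : A →ₐ[k[X]] AlgebraicClosure κ⸨X⸩ := IsAlgClosed.lift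
  exact ⟨f, f.commutes⟩

theorem nonempty_of_isAlgClosure (K : Type*) {A : Type*} [Field K] [Field A] [Algebra k[X] K]
    [IsFractionRing k[X] K] [Algebra K A] [IsAlgClosure K A] [Algebra k[X] A]
    [IsScalarTower k[X] K A] (t : κ) : Nonempty (TaylorEmbedding k A t) := by
  have : Algebra.IsAlgebraic K A := IsAlgClosure.isAlgebraic
  have : FaithfulSMul k[X] A := (faithfulSMul_iff_algebraMap_injective _ _).2 <| by
    rw [IsScalarTower.algebraMap_eq k[X] K A]
    exact (algebraMap K A).injective.comp (IsFractionRing.injective _ _)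
  have : Algebra.IsAlgebraic k[X] A := ⟨fun x ↦
    (IsFractionRing.isAlgebraic_iff k[X] K A).2 (Algebra.IsAlgebraic.isAlgebraic x)⟩
  exact nonempty k A t

section CommRing

variable {A : Type*} [CommRing A] [Algebra k[X] A] {t : κ} (v : TaylorEmbedding k A t)

/-- The composite of a place with a `k[X]`-endomorphism of `A`; used to pass to a conjugate
place. -/
noncomputable def comp (τ : A →ₐ[k[X]] A) : TaylorEmbedding k A t where
  hom := v.hom.comp τ
  hom_algebraMap p := by simp [v.hom_algebraMap]

theorem aeval_hom (P : k[X][X]) (x : A) :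
    aeval (v.hom x) (P.map (taylorExpansion k t)) = v.hom (aeval x P) := by
  have hcomp : v.hom.comp (algebraMap k[X] A) = (algebraMap κ⟦X⟧ _).comp (taylorExpansion k t) :=
    RingHom.ext v.hom_algebraMap
  rw [aeval_def, aeval_def, eval₂_map, hom_eval₂, hcomp]

end CommRing

section Field

variable {A : Type*} [Field A] [Algebra k[X] A] {t : κ} (v : TaylorEmbedding k A t)

theorem isRoot_of_algebraMap_eq {P : k[X][X]} {x : A} (hx : aeval x P = 0) {r : κ⟦X⟧}
    (hr : algebraMap κ⟦X⟧ _ r = v.hom x) : (P.map (taylorExpansion k t)).IsRoot r :=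
  algebraMap_powerSeries_injective κ <| by
    rw [← coe_aeval_eq_eval, ← aeval_algebraMap_apply, hr, aeval_hom, hx, map_zero, map_zero]

theorem exists_aeval_eq_zero [IsAlgClosed A] {P : k[X][X]} (hP : P.Monic)
    {y : AlgebraicClosure κ⸨X⸩} (hy : aeval y (P.map (taylorExpansion k t)) = 0) :
    ∃ x, aeval x P = 0 ∧ v.hom x = y := by
  have hmap : (P.map (algebraMap k[X] A)).map v.hom =
      (P.map (taylorExpansion k t)).map (algebraMap κ⟦X⟧ _) := by
    rw [Polynomial.map_map, Polynomial.map_map]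
    congr 1
    exact RingHom.ext v.hom_algebraMap
  obtain ⟨x, rfl⟩ := (IsAlgClosed.splits (P.map (algebraMap k[X] A))).mem_range_of_isRoot
    (hP.map _).ne_zero (i := v.hom) (x := y) (by rwa [hmap, IsRoot, eval_map_algebraMap])
  exact ⟨x, v.hom.injective (by rw [← aeval_hom, hy, map_zero]), rfl⟩

theorem exists_algebraMap_eq [IsAlgClosed κ] {P : k[X][X]} (hP : P.Monic)
    (hsep : ((P.map (taylorExpansion k t)).map PowerSeries.constantCoeff).Separable) {x : A}
    (hx : aeval x P = 0) : ∃ r, algebraMap κ⟦X⟧ _ r = v.hom x := by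
  have hsplit : (P.map (taylorExpansion k t)).Splits := splits_of_splits_map_of_separable
    PowerSeries.constantCoeff_surj (hP.map _) (IsAlgClosed.splits _) hsep
  obtain ⟨r, -, hr⟩ := exists_isRoot_algebraMap_eq (hP.map _) hsplit (y := v.hom x)
    (by rw [aeval_hom, hx, map_zero])
  exact ⟨r, hr⟩

variable (K : Type*) [Field K] [Algebra k[X] K] [IsFractionRing k[X] K] [Algebra K A]
  [IsScalarTower k[X] K A]

/-- The elements of `A` that become Laurent series at the place `v`, that is, the decomposition
field of `v`. -/
noncomputable def laurentField : IntermediateField K A :=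
  ((algebraMap κ⸨X⸩ _).fieldRange.comap v.hom).toIntermediateField fun x ↦ by
    obtain ⟨p, q, -, rfl⟩ := IsFractionRing.div_surjective (A := k[X]) x
    refine ⟨algebraMap κ⟦X⟧ _ (taylorExpansion k t p) /
      algebraMap κ⟦X⟧ _ (taylorExpansion k t q), ?_⟩
    simp only [map_div₀, ← IsScalarTower.algebraMap_apply, v.hom_algebraMap]

variable {K}

theorem mem_laurentField {x : A} : x ∈ v.laurentField K ↔ ∃ c, algebraMap κ⸨X⸩ _ c = v.hom x :=
  Iff.rfl

theorem mem_laurentField_of_algebraMap_eq {x : A} {r : κ⟦X⟧} (hr : algebraMap κ⟦X⟧ _ r = v.hom x) :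
    x ∈ v.laurentField K :=
  ⟨algebraMap κ⟦X⟧ κ⸨X⸩ r, by
    rw [← hr, ← IsScalarTower.algebraMap_apply κ⟦X⟧ κ⸨X⸩]⟩

theorem mem_laurentField_of_isAlgebraic [IsAlgClosed κ] [Algebra k A] [IsScalarTower k k[X] A]
    {x : A} (hx : IsAlgebraic k x) : x ∈ v.laurentField K := by
  obtain ⟨p, hp, hpx⟩ := hx
  have hconst : v.hom.comp (algebraMap k A) =
      ((algebraMap κ⟦X⟧ _).comp PowerSeries.C).comp (algebraMap k κ) := RingHom.ext fun c ↦ by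
    rw [RingHom.comp_apply, IsScalarTower.algebraMap_apply k k[X] A, v.hom_algebraMap]
    exact congrArg _ (taylorExpansion_C t c)
  obtain ⟨c, hc⟩ := (IsAlgClosed.splits (p.map (algebraMap k κ))).mem_range_of_isRoot
    (map_ne_zero hp) (i := (algebraMap κ⟦X⟧ _).comp PowerSeries.C) (x := v.hom x) <| by
      rw [Polynomial.map_map, ← hconst, IsRoot, eval_map, ← hom_eval₂, ← aeval_def, hpx, map_zero]
  exact v.mem_laurentField_of_algebraMap_eq hc

theorem natDegree_minpoly_hom_le {Λ : IntermediateField K A} (hΛ : Λ ≤ v.laurentField K) {x : A}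
    (hx : IsIntegral Λ x) :
    (minpoly κ⸨X⸩ (v.hom x)).natDegree ≤ (minpoly Λ x).natDegree := by
  set P := (minpoly Λ x).map (v.hom.comp (algebraMap Λ A)) with hP
  obtain ⟨Q, hQ, hQdeg, hQmonic⟩ : ∃ Q : κ⸨X⸩[X], Q.map (algebraMap _ _) = P ∧
      Q.natDegree = P.natDegree ∧ Q.Monic := by
    refine lifts_and_natDegree_eq_and_monic ((lifts_iff_coeff_lifts P).2 fun i ↦ ?_)
      ((minpoly.monic hx).map _)
    rw [hP, coeff_map]
    exact v.mem_laurentField.1 (hΛ ((minpoly Λ x).coeff i).2)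
  rw [← (minpoly.monic hx).natDegree_map (v.hom.comp (algebraMap Λ A)), ← hP, ← hQdeg]
  refine natDegree_le_of_dvd (minpoly.dvd _ _ ?_) hQmonic.ne_zero
  rw [← eval_map_algebraMap, hQ, hP, eval_map, ← hom_eval₂, ← aeval_def, minpoly.aeval, map_zero]

theorem minpoly_eq_trinomial {Λ : IntermediateField K A} (hΛ : Λ ≤ v.laurentField K) {m n : ℕ}
    (hm : 0 < m) (hmn : m < n) {c d : Λ} {c' d' : κ⟦X⟧} (hc : algebraMap κ⟦X⟧ _ c' = v.hom c)
    (hd : algebraMap κ⟦X⟧ _ d' = v.hom d) (hXc : PowerSeries.X ∣ c') (hXd : PowerSeries.X ∣ d')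
    (hXd2 : ¬ PowerSeries.X ^ 2 ∣ d') {x : A} (hx : aeval x (trinomial 0 m n d c 1) = 0) :
    minpoly Λ x = trinomial 0 m n d c 1 := by
  have hmonic : (trinomial 0 m n d c 1).Monic := trinomial_monic hm hmn
  have hint : IsIntegral Λ x := ⟨_, hmonic, hx⟩
  have hEis : (trinomial 0 m n d' c' 1).IsEisensteinAt (Ideal.span {PowerSeries.X}) :=
    isEisensteinAt_trinomial PowerSeries.span_X_isPrime.ne_top hm hmn
      (Ideal.mem_span_singleton.2 hXc) (Ideal.mem_span_singleton.2 hXd)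
      (by rwa [Ideal.span_singleton_pow, Ideal.mem_span_singleton])
  have hroot : aeval (v.hom x) (trinomial 0 m n d' c' 1) = 0 := by
    rw [aeval_def, ← eval_map, trinomial_map, hc, hd, map_one]
    have := congrArg v.hom hx
    rw [aeval_def, hom_eval₂, ← eval_map, trinomial_map, map_zero, map_one] at this
    exact this
  have hdeg := natDegree_minpoly_of_isEisensteinAt (C := κ⸨X⸩) hEis PowerSeries.span_X_isPrime
    (trinomial_monic hm hmn) (by rw [trinomial_natDegree hm hmn one_ne_zero]; omega) hroot
  rw [trinomial_natDegree hm hmn one_ne_zero] at hdeg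
  symm
  refine eq_of_monic_of_dvd_of_natDegree_le (minpoly.monic hint) hmonic (minpoly.dvd _ _ hx) ?_
  rw [trinomial_natDegree hm hmn one_ne_zero, ← hdeg]
  exact v.natDegree_minpoly_hom_le hΛ hint

end Field

end TaylorEmbedding

end Places

section GoodReduction

open Polynomial
open scoped PowerSeries LaurentSeries

theorem exists_ne_zero_forall_separable_map {R K : Type*} [CommRing R] [IsDomain R] [Field K]
    [Algebra R K] [FaithfulSMul R K] {P : R[X]} (hP : P.Monic)
    (hsep : (P.map (algebraMap R K)).Separable) :
    ∃ D : R, D ≠ 0 ∧ ∀ {κ : Type*} [Field κ] (f : R →+* κ), f D ≠ 0 → (P.map f).Separable := by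
  rcases eq_or_ne P.natDegree 0 with hdeg | hdeg
  · refine ⟨1, one_ne_zero, fun f _ ↦ ?_⟩
    rw [hP.natDegree_eq_zero.1 hdeg, Polynomial.map_one]
    exact separable_one
  have hinj : Function.Injective (algebraMap R K) := FaithfulSMul.algebraMap_injective R K
  refine ⟨P.resultant P.derivative, fun h0 ↦ resultant_ne_zero _ _ hsep ?_, fun f hf ↦ ?_⟩
  · rw [derivative_map, natDegree_map_eq_of_injective hinj, natDegree_map_eq_of_injective hinj,
      resultant_map_map, h0, map_zero]
  · obtain ⟨p, q, -, -, hpq⟩ :=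
      exists_mul_add_mul_eq_C_resultant P P.derivative le_rfl le_rfl (Or.inl hdeg)
    have hmap := congrArg (Polynomial.map f) hpq
    rw [Polynomial.map_add, Polynomial.map_mul, Polynomial.map_mul, map_C, ← derivative_map] at hmap
    have hCC : Polynomial.C (f (P.resultant P.derivative))⁻¹ *
        Polynomial.C (f (P.resultant P.derivative)) = 1 := by
      rw [← C_mul, inv_mul_cancel₀ hf, C_1]
    refine ⟨Polynomial.C (f (P.resultant P.derivative))⁻¹ * p.map f,
      Polynomial.C (f (P.resultant P.derivative))⁻¹ * q.map f, ?_⟩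
    linear_combination
      Polynomial.C (f (P.resultant P.derivative))⁻¹ * hmap + hCC

theorem separable_map_minpoly {R K A : Type*} [CommRing R] [IsDomain R] [IsIntegrallyClosed R]
    [Field K] [Field A] [Algebra R K] [IsFractionRing R K] [Algebra K A] [Algebra R A]
    [IsScalarTower R K A] {b : A} (hb : IsIntegral R b) (hsep : IsSeparable K b) :
    ((minpoly R b).map (algebraMap R K)).Separable := by
  rwa [← minpoly.isIntegrallyClosed_eq_field_fractions' K hb]

variable {k : Type*} (κ : Type*) [Field k] [Field κ] [Algebra k κ]

theorem exists_ne_zero_forall_separable_reduction {K : Type*} [Field K] [Algebra k[X] K]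
    [FaithfulSMul k[X] K] {P : k[X][X]} (hP : P.Monic)
    (hsep : (P.map (algebraMap k[X] K)).Separable) :
    ∃ D : k[X], D ≠ 0 ∧ ∀ t : κ, aeval t D ≠ 0 →
      ((P.map (taylorExpansion k t)).map PowerSeries.constantCoeff).Separable := by
  obtain ⟨D, hD, h⟩ := exists_ne_zero_forall_separable_map hP hsep
  refine ⟨D, hD, fun t ht ↦ ?_⟩
  rw [Polynomial.map_map]
  exact h _ (by rwa [RingHom.comp_apply, constantCoeff_taylorExpansion])

theorem exists_ne_zero_forall_le_laurentField [IsAlgClosed κ] {K A : Type*} [Field K] [Field A]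
    [Algebra k[X] K] [IsFractionRing k[X] K] [Algebra K A] [Algebra k[X] A]
    [IsScalarTower k[X] K A] (F : IntermediateField K A) [FiniteDimensional K F]
    [Algebra.IsSeparable K F] :
    ∃ D : k[X], D ≠ 0 ∧ ∀ t : κ, aeval t D ≠ 0 →
      ∀ v : TaylorEmbedding k A t, F ≤ v.laurentField K := by
  obtain ⟨b, -, hb, hbF⟩ := exists_isIntegral_adjoin_eq k[X] F
  have hbsep : IsSeparable K b :=
    isSeparable_of_mem (hbF ▸ IntermediateField.mem_adjoin_simple_self K b : b ∈ F)
  obtain ⟨D, hD, h⟩ := exists_ne_zero_forall_separable_reduction κ (minpoly.monic hb)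
    (separable_map_minpoly hb hbsep)
  refine ⟨D, hD, fun t ht v ↦ ?_⟩
  obtain ⟨r, hr⟩ := v.exists_algebraMap_eq (minpoly.monic hb) (h t ht) (minpoly.aeval k[X] b)
  rw [← hbF, IntermediateField.adjoin_simple_le_iff]
  exact v.mem_laurentField_of_algebraMap_eq hr

end GoodReduction

section Specialization

open Polynomial

theorem exists_prime_gt_forall_cast_ne_zero (k : Type*) [Field k] (N : ℕ) :
    ∃ n : ℕ, n.Prime ∧ N < n ∧ (n : k) ≠ 0 ∧ ((n - 2 : ℕ) : k) ≠ 0 := by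
  rcases eq_or_ne (ringChar k) 0 with hchar | hchar
  · have := (CharP.ringChar_zero_iff_CharZero k).1 hchar
    obtain ⟨n, hn, hprime⟩ := Nat.exists_infinite_primes (N + 3)
    exact ⟨n, hprime, by omega, Nat.cast_ne_zero.2 hprime.ne_zero, Nat.cast_ne_zero.2 (by omega)⟩
  · obtain ⟨n, hprime, hn, hmod⟩ := Nat.exists_prime_gt_modEq_one (N + 3) hchar
    have hcast : (n : k) = 1 := by
      simpa using (CharP.cast_eq_iff_mod_eq k (ringChar k) (a := n) (b := 1)).2 hmod
    refine ⟨n, hprime, by omega, by rw [hcast]; exact one_ne_zero, ?_⟩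
    rw [Nat.cast_sub (by omega), hcast]
    norm_num

theorem exists_ne_zero_eval_pow_ne_zero {R : Type*} [CommRing R] [IsDomain R] {p : R[X][X]}
    (hp : p ≠ 0) {q : R[X]} (hq : 0 < q.natDegree) : ∃ j ≠ 0, p.eval (q ^ j) ≠ 0 := by
  by_contra! hcon
  refine hp (eq_zero_of_infinite_isRoot p ?_)
  refine (Set.infinite_range_of_injective (f := fun j : ℕ ↦ q ^ (j + 1)) fun i j hij ↦ ?_).mono ?_
  · have := congrArg natDegree hij
    simp only [natDegree_pow] at this
    exact Nat.succ_injective (Nat.eq_of_mul_eq_mul_right hq this)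
  · rintro _ ⟨j, rfl⟩
    exact hcon (j + 1) j.succ_ne_zero

theorem map_eval_reverse_eq_zero_iff {R F : Type*} [CommRing R] [Field F] (f : R →+* F) (g : R[X])
    {x : F} {Y : R} (h : f Y * x = 1) : f (g.reverse.eval Y) = 0 ↔ eval₂ f x g = 0 := by
  let _ : Invertible x := ⟨f Y, h, by rw [mul_comm, h]⟩
  rw [← eval₂_reverse_eq_zero_iff f x g, ← eval₂_at_apply]
  rfl

variable {k : Type*} (κ : Type*) [Field k] [Field κ] [Algebra k κ] [IsAlgClosed κ]

theorem exists_prime_gt_aeval_X_pow_sub_one_eq_zero {D : k[X]} (hD : D ≠ 0) (N : ℕ) :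
    ∃ q : ℕ, q.Prime ∧ N < q ∧ ∃ t : κ, aeval t D ≠ 0 ∧ aeval t (X ^ q - 1 : k[X]) = 0 ∧
      aeval t (derivative (X ^ q - 1 : k[X])) ≠ 0 := by
  obtain ⟨q, hqN, hq⟩ := Nat.exists_infinite_primes (N + ringChar k + D.natDegree + 1)
  have hqk : (q : k) ≠ 0 := fun h ↦ by
    rcases (Nat.dvd_prime hq).1 ((ringChar.spec k q).1 h) with h | h
    · exact CharP.ringChar_ne_one h
    · omega
  have hsep : (X ^ q - 1 : k[X]).Separable := X_pow_sub_one_separable_iff.2 hqk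
  have hcard : (X ^ q - 1 : k[X]).natDegree = q := natDegree_X_pow_sub_C (r := (1 : k))
  obtain ⟨t, ht, htD⟩ : ∃ t ∈ (X ^ q - 1 : k[X]).rootSet κ, t ∉ D.rootSet κ := by
    refine Set.not_subset.1 fun h ↦ ?_
    have := Set.ncard_le_ncard h (D.rootSet_finite κ)
    rw [← Nat.card_coe_set_eq, Nat.card_eq_fintype_card,
      card_rootSet_eq_natDegree hsep (IsAlgClosed.splits _), hcard] at this
    have := D.ncard_rootSet_le κ
    omega
  rw [mem_rootSet_of_ne hD] at htD
  have ht0 := aeval_eq_zero_of_mem_rootSet ht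
  exact ⟨q, hq, by omega, t, htD, ht0, hsep.aeval_derivative_ne_zero ht0⟩

theorem exists_forall_aeval_derivative_ne_zero {D : k[X]} (hD : D ≠ 0) :
    ∃ (c d : k[X]) (t₀ t₁ : κ), (aeval t₀ D ≠ 0 ∧ aeval t₁ D ≠ 0) ∧
      (aeval t₀ c ≠ 0 ∧ aeval t₀ d = 0 ∧ aeval t₀ (derivative d) ≠ 0) ∧
      aeval t₁ c = 0 ∧ aeval t₁ d = 0 ∧ aeval t₁ (derivative d) ≠ 0 := by
  obtain ⟨q, hq, -, t₁, ht₁D, ht₁, ht₁'⟩ := exists_prime_gt_aeval_X_pow_sub_one_eq_zero κ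
    (mul_ne_zero hD (X_sub_C_ne_zero 1)) 0
  have hqD : D * (X ^ q - 1) ≠ 0 := mul_ne_zero hD (monic_X_pow_sub_C 1 hq.ne_zero).ne_zero
  obtain ⟨m, hm, hqm, t₀, ht₀D, ht₀, ht₀'⟩ :=
    exists_prime_gt_aeval_X_pow_sub_one_eq_zero κ hqD q
  rw [map_mul, mul_ne_zero_iff] at ht₀D ht₁D
  have ht₁m : aeval t₁ (X ^ m - 1 : k[X]) ≠ 0 := fun h ↦ ht₁D.2 <| by
    simp only [map_sub, map_pow, aeval_X, map_one, sub_eq_zero] at h ht₁ ⊢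
    rw [← pow_one t₁, ← (Nat.coprime_primes hq hm).2 hqm.ne, pow_gcd_eq_one]
    exact ⟨ht₁, h⟩
  refine ⟨X ^ q - 1, (X ^ q - 1) * (X ^ m - 1), t₀, t₁, ⟨ht₀D.1, ht₁D.1⟩, ⟨ht₀D.2, ?_, ?_⟩, ht₁,
    ?_, ?_⟩
  · rw [map_mul, ht₀, mul_zero]
  · rw [derivative_mul, map_add, map_mul, map_mul, ht₀, mul_zero, zero_add]
    exact mul_ne_zero ht₀D.2 ht₀'
  · rw [map_mul, ht₁, zero_mul]
  · rw [derivative_mul, map_add, map_mul, map_mul, ht₁, zero_mul, add_zero]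
    exact mul_ne_zero ht₁' ht₁m

theorem exists_aeval_eval_eq_zero {h : k[X][X]} (h0 : h.eval 0 = 1) (h1 : h ≠ 1) {D : k[X]}
    (hD : D ≠ 0) :
    ∃ (Y : k[X]) (t : κ), aeval t D ≠ 0 ∧ aeval t Y ≠ 0 ∧ aeval t (h.eval Y) = 0 ∧
      h.eval Y ≠ 0 := by
  -- `Y` divides `h(Y) - 1`, so a zero of `h(Y)` is not a zero of `Y`, let alone of `D`.
  obtain ⟨j, hj, hjY⟩ := exists_ne_zero_eval_pow_ne_zero (sub_ne_zero.2 h1) (q := D * X)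
    (by rw [natDegree_mul_X hD]; omega)
  set Y : k[X] := (D * X) ^ j
  obtain ⟨w, hw⟩ : Y ∣ h.eval Y - 1 := by simpa [h0] using sub_dvd_eval_sub Y 0 h
  have hN : h.eval Y = 1 + Y * w := by rw [← hw]; ring
  have hN0 : (h.eval Y).eval 0 = 1 := by simp [hN, Y, hj]
  have hdeg : (h.eval Y).degree ≠ 0 := fun hdeg ↦ by
    rw [eq_C_of_degree_le_zero hdeg.le, eval_C] at hN0
    rw [eval_sub, eval_one, eq_C_of_degree_le_zero hdeg.le, hN0, C_1, sub_self] at hjY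
    exact hjY rfl
  obtain ⟨t, ht⟩ := IsAlgClosed.exists_aeval_eq_zero κ (h.eval Y) hdeg
  have htY : aeval t Y ≠ 0 := fun hz ↦ by
    rw [hN, map_add, map_mul, hz, map_one, zero_mul, add_zero] at ht
    exact one_ne_zero ht
  refine ⟨Y, t, fun hz ↦ htY ?_, htY, ht, fun hz ↦ ?_⟩
  · rw [map_pow, map_mul, hz, zero_mul, zero_pow hj]
  · rw [hz, eval_zero] at hN0
    exact zero_ne_one hN0

end Specialization

section SymmetricGroup

open Polynomial MulAction

variable {K A : Type*} [Field K] [Field A] [Algebra K A]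

theorem separable_of_irreducible_of_natDegree_ne_zero {p : K[X]} (hp : Irreducible p)
    (hdeg : (p.natDegree : K) ≠ 0) : p.Separable := by
  rw [separable_iff_derivative_ne_zero hp]
  intro h
  have hpos : p.natDegree ≠ 0 := fun h0 ↦ hdeg (by rw [h0, Nat.cast_zero])
  have hcoeff := congrArg (coeff · (p.natDegree - 1)) h
  simp only [coeff_derivative, coeff_zero, Nat.sub_add_cancel (Nat.pos_of_ne_zero hpos)] at hcoeff
  rw [← Nat.cast_add_one, Nat.sub_add_cancel (Nat.pos_of_ne_zero hpos)] at hcoeff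
  exact mul_ne_zero (leadingCoeff_ne_zero.2 hp.ne_zero) hdeg hcoeff

variable {P : K[X]} {Λ : IntermediateField K A}

theorem isPretransitive_rootSet [Normal K A]
    (hΛ : ∀ x ∈ P.rootSet A, minpoly Λ x = P.map (algebraMap K Λ)) :
    IsPretransitive Λ.fixingSubgroup (P.rootSet A) := ⟨fun x y ↦ by
  obtain ⟨σ, hσ, hxy⟩ := exists_mem_fixingSubgroup_apply_eq <|
    (hΛ x x.2).trans (hΛ y y.2).symm
  exact ⟨⟨σ, hσ⟩, Subtype.ext hxy⟩⟩

theorem toPermHom_rootSet_surjective [Normal K A] [IsPretransitive Λ.fixingSubgroup (P.rootSet A)]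
    (hP : P.Separable) (hprime : (Nat.card (P.rootSet A)).Prime) {F : IntermediateField K A}
    (hF : Λ ≤ F) {x : A} (hx : x ∈ P.rootSet A) (hxF : x ∉ F)
    (hcard : (P.rootSet A \ F).ncard ≤ 2) :
    Function.Surjective (toPermHom Λ.fixingSubgroup (P.rootSet A)) := by
  have hsep : IsSeparable K x := hP.of_dvd (minpoly.dvd _ _ (aeval_eq_zero_of_mem_rootSet hx))
  obtain ⟨σ, hσ, hne⟩ := exists_mem_fixingSubgroup_apply_ne hsep hxF
  refine toPermHom_surjective_of_prime_card hprime
    (g := ⟨σ, IntermediateField.fixingSubgroup_antitone hF hσ⟩) (x := ⟨x, hx⟩)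
    (fun h ↦ hne (congrArg Subtype.val h)) (le_trans ?_ hcard)
  rw [← Set.ncard_image_of_injective _ Subtype.val_injective]
  refine Set.ncard_le_ncard ?_ ((P.rootSet_finite A).sdiff)
  rintro _ ⟨y, hy, rfl⟩
  exact ⟨y.2, fun hyF ↦ hy (Subtype.ext
    ((IntermediateField.mem_fixingSubgroup_iff _ _).1 hσ y hyF))⟩

end SymmetricGroup

section TrinomialGalois

open Polynomial MulAction
open scoped PowerSeries LaurentSeries

variable {k κ : Type*} [Field k] [Field κ] [Algebra k κ]
  (K : Type*) {A : Type*} [Field K] [Field A]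
  [Algebra k[X] K] [IsFractionRing k[X] K] [Algebra K A] [Algebra k[X] A]
  [IsScalarTower k[X] K A]

namespace TaylorEmbedding

variable {t : κ} (v : TaylorEmbedding k A t)

theorem exists_aeval_trinomial_eq_zero_notMem_laurentField [IsAlgClosed A] {m : ℕ} (c : k[X])
    {d : k[X]} (hd : aeval t d = 0) (hd' : aeval t (derivative d) ≠ 0) :
    ∃ x : A, aeval x (trinomial 0 2 (m + 3) d c 1) = 0 ∧ x ∉ v.laurentField K := by
  have := PowerSeries.span_X_isPrime (R := κ)
  obtain ⟨y, hy, hyC⟩ := exists_aeval_trinomial_eq_zero_notMem_range κ⸨X⸩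
    (B := AlgebraicClosure κ⸨X⸩) (m := m) (𝓟 := Ideal.span {PowerSeries.X}) (taylorExpansion k t c)
    (Ideal.mem_span_singleton.2 (X_dvd_taylorExpansion_iff.2 hd)) (by
      rw [Ideal.span_singleton_pow, Ideal.mem_span_singleton]
      exact not_X_sq_dvd_taylorExpansion hd')
  obtain ⟨x, hx, rfl⟩ := v.exists_aeval_eq_zero (trinomial_monic two_pos (by omega))
    (y := y) (P := trinomial 0 2 (m + 3) d c 1) (by rwa [trinomial_map, map_one])
  exact ⟨x, hx, hyC⟩

theorem exists_finset_aeval_trinomial_eq_zero [IsAlgClosed κ] [IsAlgClosed A] {m : ℕ}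
    (hm : (m : κ) ≠ 0) {c d : k[X]} (hc : aeval t c ≠ 0) (hd : aeval t d = 0) :
    ∃ s : Finset A, s.card = m ∧
      ∀ x ∈ s, aeval x (trinomial 0 2 (m + 2) d c 1) = 0 ∧ x ∈ v.laurentField K := by
  classical
  obtain ⟨s, hs, hroot⟩ := exists_finset_isRoot_trinomial PowerSeries.constantCoeff_surj hm
    (c := taylorExpansion k t c) (d := taylorExpansion k t d)
    (by rwa [constantCoeff_taylorExpansion]) (by rwa [constantCoeff_taylorExpansion])
  have hm0 : 0 < m := Nat.pos_of_ne_zero fun h0 ↦ hm (by rw [h0, Nat.cast_zero])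
  have hlift (r : s) : ∃ x : A, aeval x (trinomial 0 2 (m + 2) d c 1) = 0 ∧
      v.hom x = algebraMap κ⟦X⟧ _ (r : κ⟦X⟧) :=
    v.exists_aeval_eq_zero (trinomial_monic two_pos (by omega)) <| by
      rw [trinomial_map, map_one, aeval_algebraMap_apply, coe_aeval_eq_eval, hroot r r.2, map_zero]
  choose x hx hxr using hlift
  have hinj : Function.Injective x := fun r r' h ↦ Subtype.ext <|
    algebraMap_powerSeries_injective κ <| by rw [← hxr, ← hxr, h]
  refine ⟨s.attach.image x, by rw [Finset.card_image_of_injective _ hinj, Finset.card_attach, hs],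
    fun y hy ↦ ?_⟩
  obtain ⟨r, -, rfl⟩ := Finset.mem_image.1 hy
  exact ⟨hx r, v.mem_laurentField_of_algebraMap_eq (hxr r).symm⟩

variable {K}

theorem minpoly_eq_map_trinomial {Λ : IntermediateField K A} (hΛ : Λ ≤ v.laurentField K) {m n : ℕ}
    (hm : 0 < m) (hmn : m < n) {c d : k[X]} (hc : aeval t c = 0) (hd : aeval t d = 0)
    (hd' : aeval t (derivative d) ≠ 0) {x : A} (hx : aeval x (trinomial 0 m n d c 1) = 0) :
    minpoly Λ x =
      ((trinomial 0 m n d c 1).map (algebraMap k[X] K)).map (algebraMap K Λ) := by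
  have hcoe (p : k[X]) : algebraMap κ⟦X⟧ _ (taylorExpansion k t p) =
      v.hom (algebraMap K Λ (algebraMap k[X] K p)) := by
    rw [← v.hom_algebraMap, IsScalarTower.algebraMap_apply k[X] K A]
    rfl
  have hmap : ((trinomial 0 m n d c 1).map (algebraMap k[X] K)).map (algebraMap K Λ) =
      trinomial 0 m n (algebraMap K Λ (algebraMap k[X] K d))
        (algebraMap K Λ (algebraMap k[X] K c)) 1 := by
    rw [trinomial_map, trinomial_map, map_one, map_one]
  rw [hmap]
  refine v.minpoly_eq_trinomial hΛ hm hmn (hcoe c) (hcoe d) (X_dvd_taylorExpansion_iff.2 hc)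
    (X_dvd_taylorExpansion_iff.2 hd) (not_X_sq_dvd_taylorExpansion hd') ?_
  rwa [← hmap, aeval_map_algebraMap, aeval_map_algebraMap]

end TaylorEmbedding

variable {K}

theorem exists_separable_toPermHom_rootSet_surjective [IsAlgClosed κ] [IsAlgClosure K A]
    {n : ℕ} (hn : (n + 3).Prime)
    (hnk : ((n + 3 : ℕ) : k) ≠ 0) (hnk' : ((n + 1 : ℕ) : k) ≠ 0) {c d : k[X]} {t₀ t₁ : κ}
    (v₀ : TaylorEmbedding k A t₀) (v₁ : TaylorEmbedding k A t₁)
    (hc₀ : aeval t₀ c ≠ 0) (hd₀ : aeval t₀ d = 0) (hd₀' : aeval t₀ (derivative d) ≠ 0)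
    (hc₁ : aeval t₁ c = 0) (hd₁ : aeval t₁ d = 0) (hd₁' : aeval t₁ (derivative d) ≠ 0) :
    ∃ P : K[X], P.Separable ∧ Nat.card (P.rootSet A) = n + 3 ∧ Function.Surjective
      (toPermHom (v₀.laurentField K ⊓ v₁.laurentField K).fixingSubgroup (P.rootSet A)) := by
  have : IsAlgClosed A := IsAlgClosure.isAlgClosed K
  set Λ := v₀.laurentField K ⊓ v₁.laurentField K
  set P : K[X] := (trinomial 0 2 (n + 3) d c 1).map (algebraMap k[X] K)
  have hmonic : (trinomial 0 2 (n + 3) d c 1).Monic := trinomial_monic two_pos (by omega)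
  have hdeg : P.natDegree = n + 3 := by
    rw [hmonic.natDegree_map, trinomial_natDegree two_pos (by omega) one_ne_zero]
  have hmem {x : A} : x ∈ P.rootSet A ↔ aeval x (trinomial 0 2 (n + 3) d c 1) = 0 := by
    rw [mem_rootSet_of_ne (hmonic.map _).ne_zero, aeval_map_algebraMap]
  have hminpoly (x : A) (hx : x ∈ P.rootSet A) : minpoly Λ x = P.map (algebraMap K Λ) :=
    v₁.minpoly_eq_map_trinomial inf_le_right two_pos (by omega) hc₁ hd₁ hd₁' (hmem.1 hx)
  obtain ⟨x, hx, hx₀⟩ :=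
    v₀.exists_aeval_trinomial_eq_zero_notMem_laurentField K (m := n) c hd₀ hd₀'
  have hP : P.Separable := by
    rw [← separable_map (algebraMap K Λ)]
    refine separable_of_irreducible_of_natDegree_ne_zero ?_ ?_
    · rw [← hminpoly x (hmem.2 hx)]
      exact minpoly.irreducible (Normal.isIntegral (F := K) inferInstance x).tower_top
    · rwa [natDegree_map, hdeg, ← map_natCast ((algebraMap K Λ).comp ((algebraMap k[X] K).comp C)),
        _root_.map_ne_zero]
  have hcard : Nat.card (P.rootSet A) = n + 3 := by
    rw [Nat.card_eq_fintype_card, card_rootSet_eq_natDegree hP (IsAlgClosed.splits _), hdeg]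
  have := isPretransitive_rootSet hminpoly
  refine ⟨P, hP, hcard,
    toPermHom_rootSet_surjective hP (hcard ▸ hn) inf_le_left (hmem.2 hx) hx₀ ?_⟩
  obtain ⟨s, hs, hsF⟩ := v₀.exists_finset_aeval_trinomial_eq_zero K (m := n + 1)
    (by rwa [← map_natCast (algebraMap k κ), _root_.map_ne_zero]) hc₀ hd₀
  have hsub : P.rootSet A \ v₀.laurentField K ⊆ P.rootSet A \ s :=
    Set.sdiff_subset_sdiff_right fun y hy ↦ (hsF y hy).2
  refine (Set.ncard_le_ncard hsub (P.rootSet_finite A).sdiff).trans ?_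
  rw [Set.ncard_sdiff fun y hy ↦ hmem.2 (hsF y hy).1, ← Nat.card_coe_set_eq, hcard,
    Set.ncard_coe_finset, hs]
  omega

end TrinomialGalois

section FirstStep

open Polynomial MulAction

variable {k K A : Type*} [Field k] [Field K] [Field A]
  [Algebra k[X] K] [IsFractionRing k[X] K] [Algebra K A] [IsAlgClosure K A] [Algebra k[X] A]
  [IsScalarTower k[X] K A] [Algebra k A] [IsScalarTower k k[X] A]

theorem exists_toPermHom_rootSet_surjective (L : IntermediateField K A) [FiniteDimensional K L]
    [Algebra.IsSeparable K L] (N : ℕ) :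
    ∃ Λ : IntermediateField K A, L ≤ Λ ∧ (∀ x : A, IsAlgebraic k x → x ∈ Λ) ∧
      ∃ P : K[X], P.Separable ∧ N ≤ Nat.card (P.rootSet A) ∧
        Function.Surjective (toPermHom Λ.fixingSubgroup (P.rootSet A)) := by
  let κ := AlgebraicClosure k
  obtain ⟨D, hD, hL⟩ := exists_ne_zero_forall_le_laurentField (k := k) κ L
  obtain ⟨c, d, t₀, t₁, ⟨ht₀, ht₁⟩, ⟨hc₀, hd₀, hd₀'⟩, hc₁, hd₁, hd₁'⟩ :=
    exists_forall_aeval_derivative_ne_zero κ hD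
  obtain ⟨v₀⟩ := TaylorEmbedding.nonempty_of_isAlgClosure (k := k) (A := A) K t₀
  obtain ⟨v₁⟩ := TaylorEmbedding.nonempty_of_isAlgClosure (k := k) (A := A) K t₁
  obtain ⟨n, hn, hNn, hnk, hnk'⟩ := exists_prime_gt_forall_cast_ne_zero k (N + 3)
  obtain ⟨m, rfl⟩ := Nat.exists_eq_add_of_le' (show 3 ≤ n by omega)
  obtain ⟨P, hP, hcard, hsurj⟩ := exists_separable_toPermHom_rootSet_surjective (K := K) hn hnk
    hnk' v₀ v₁ hc₀ hd₀ hd₀' hc₁ hd₁ hd₁'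
  exact ⟨_, le_inf (hL t₀ ht₀ v₀) (hL t₁ ht₁ v₁), fun x hx ↦
    ⟨v₀.mem_laurentField_of_isAlgebraic hx, v₁.mem_laurentField_of_isAlgebraic hx⟩,
    P, hP, by omega, hsurj⟩

theorem exists_injective_monoidHom_perm {G X : Type*} [Group G] [Finite G] [Finite X]
    (h : Nat.card G ≤ Nat.card X) : ∃ π : G →* Equiv.Perm X, Function.Injective π := by
  classical
  have := Fintype.ofFinite G
  have := Fintype.ofFinite X
  obtain ⟨e⟩ : Nonempty (G ↪ X) := Function.Embedding.nonempty_of_card_le <| by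
    simpa only [Nat.card_eq_fintype_card] using h
  exact ⟨(Equiv.Perm.viaEmbeddingHom e).comp (toPermHom G G),
    (Equiv.Perm.viaEmbeddingHom_injective e).comp toPerm_injective⟩

theorem exists_injective_isLift {L : IntermediateField K A} [FiniteDimensional K L]
    [Algebra.IsSeparable K L] {G : Type*} [Group G] [Finite G] (α : G →* Gal(L/K)) :
    ∃ (E : IntermediateField K A) (hE : IsRegularExtension k L E) (φ : G →* Gal(E/K)),
      IsLift hE.le α φ ∧ Function.Injective φ := by
  have : Normal K A := inferInstance
  obtain ⟨Λ, hLΛ, hkΛ, P, hP, hcard, hsurj⟩ :=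
    exists_toPermHom_rootSet_surjective (k := k) L (Nat.card G)
  have : Finite (P.rootSet A) := P.rootSet_finite A
  obtain ⟨π, hπ⟩ := exists_injective_monoidHom_perm hcard
  obtain ⟨hE, φ, hφ, hφπ⟩ := exists_isRegularExtension_isLift hLΛ hkΛ (S := P.rootSet A)
    (fun x hx ↦ hP.of_dvd (minpoly.dvd _ _ (aeval_eq_zero_of_mem_rootSet hx))) α π
    fun g σ _ ↦ by
      obtain ⟨τ, hτ⟩ := hsurj (toPermHom Gal(A/K) (P.rootSet A) σ * (π g)⁻¹)
      refine ⟨τ, τ.2, fun x ↦ ?_⟩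
      have hx : τ • π g x = σ • x := by simpa using congr($hτ (π g x))
      exact congrArg Subtype.val hx
  refine ⟨_, hE, φ, hφ, fun g h hgh ↦ hπ (Equiv.ext fun x ↦ Subtype.ext ?_)⟩
  rw [← hφπ, ← hφπ, hgh]

end FirstStep

section RigidExtension

open Polynomial IntermediateField
open scoped PowerSeries LaurentSeries

variable {k κ K A : Type*} [Field k] [Field κ] [Algebra k κ] [Field K] [Field A]
  [Algebra k[X] K] [IsFractionRing k[X] K] [Algebra K A] [Algebra k[X] A] [IsScalarTower k[X] K A]

theorem surjective_of_forall_fixed [Normal K A] {G : Type*} [Group G]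
    {L : IntermediateField K A} [FiniteDimensional K L] {S : Set A} {φ : G →* Gal(L/K)}
    {ψ : G →* Gal((L ⊔ adjoin K S : IntermediateField K A)/K)} (hψ : IsLift le_sup_left φ ψ)
    (hψS : ∀ g (x : S), (ψ g ⟨x, mem_sup_adjoin x.2⟩ : A) = x)
    (hL : ∀ σ : Gal(A/K), (L ⊔ adjoin K S).map σ.toAlgHom ≤ L ⊔ adjoin K S →
      (∀ x : L, (∀ g, φ g x = x) → σ x = x) ∧ ∀ x ∈ S, σ x = x) : Function.Surjective ψ := by
  intro σ
  have hσ (y : (L ⊔ adjoin K S : IntermediateField K A)) : σ.liftNormal A y = σ y :=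
    σ.liftNormal_commutes A y
  obtain ⟨hfix, hS⟩ := hL (σ.liftNormal A) <| map_le_iff_le_comap.2 fun y hy ↦
    show σ.liftNormal A (⟨y, hy⟩ : (L ⊔ adjoin K S : IntermediateField K A)) ∈ _ from
      hσ ⟨y, hy⟩ ▸ (σ ⟨y, hy⟩).2
  obtain ⟨g, hg⟩ := exists_apply_eq_of_forall_fixed φ hfix
  have hψg (y : (L ⊔ adjoin K S : IntermediateField K A)) : (ψ g).liftNormal A y = ψ g y :=
    (ψ g).liftNormal_commutes A y
  have heqL : Set.EqOn ((ψ g).liftNormal A) (σ.liftNormal A) L := fun x hx ↦ by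
    rw [hg ⟨x, hx⟩]
    exact (hψg ⟨x, _⟩).trans (congrArg Subtype.val (hψ g ⟨x, hx⟩))
  have heqS : Set.EqOn ((ψ g).liftNormal A) (σ.liftNormal A) S := fun x hx ↦ by
    rw [hS x hx]
    exact (hψg ⟨x, mem_sup_adjoin hx⟩).trans (hψS g ⟨x, hx⟩)
  exact ⟨g, AlgEquiv.ext fun y ↦ Subtype.ext <| by
    rw [← hψg, ← hσ, eqOn_sup_adjoin heqL heqS y.2]⟩

theorem exists_map_eq_of_mul_pow_mul_add_one_eq {F B : Type*} [Field F] [IsAlgClosed F] [Field B]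
    (f : F →+* B) {a : F} (ha : a ≠ 0) (c : F) {r : ℕ} {V : B}
    (hV : f a * (V ^ (r + 1) * (V + 1)) = f c) :
    ∃ w, f w = V ∧ a * (w ^ (r + 1) * (w + 1)) = c := by
  set p : F[X] := C a * (X ^ (r + 1) * (X + 1)) - C c with hp
  have hp0 : p ≠ 0 := fun h0 ↦ ha <| by
    simpa [hp, coeff_X, coeff_one, mul_add, ← pow_succ, coeff_C] using
      congrArg (coeff · (r + 2)) h0
  obtain ⟨w, rfl⟩ := (IsAlgClosed.splits p).mem_range_of_isRoot hp0 (i := f) (x := V) <| by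
    simp [hp, hV]
  exact ⟨w, rfl, f.injective (by simpa using hV)⟩

theorem isSeparable_of_minpoly_eq_trinomial {L B : Type*} [Field L] [Field B] [Algebra L B]
    {δ : L} (hδ : δ ≠ 0) {y : B} {n : ℕ} (hy : IsIntegral L y)
    (h : minpoly L y = trinomial 0 1 (n + 2) δ δ 1) : IsSeparable L y := by
  refine (separable_iff_derivative_ne_zero (minpoly.irreducible hy)).2 fun h0 ↦ hδ ?_
  simpa [h, coeff_derivative, trinomial_middle_coeff] using congrArg (coeff · 0) h0

theorem exists_associated_taylorExpansion_X_pow {t : κ} {a : k[X]} (ha : a ≠ 0)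
    (hat : aeval t a = 0) :
    ∃ r ≠ 0, Associated (taylorExpansion k t a) (PowerSeries.X ^ r) := by
  obtain ⟨r, hr⟩ := IsDiscreteValuationRing.associated_pow_irreducible
    ((map_ne_zero_iff _ (taylorExpansion_injective t)).2 ha) PowerSeries.X_irreducible
  refine ⟨r, ?_, hr⟩
  rintro rfl
  rw [pow_zero, associated_one_iff_isUnit] at hr
  exact PowerSeries.X_prime.not_isUnit (isUnit_of_dvd_unit (X_dvd_taylorExpansion_iff.2 hat) hr)

namespace TaylorEmbedding

variable {t : κ} (v : TaylorEmbedding k A t)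

variable (K) in
/-- The place `v` isolates `x`: the conjugates of `x` over `K` are power series at `v`, and `x` is
the only one of them that vanishes there. -/
def Isolates (x : A) : Prop :=
  ∀ σ : Gal(A/K), ∃ e, algebraMap κ⟦X⟧ _ e = v.hom (σ x) ∧ (PowerSeries.X ∣ e ↔ σ x = x)

variable {x : A} {a : k[X]} {r : ℕ}

theorem mul_pow_mul_add_one_eq_iff {e : κ⟦X⟧} (he : algebraMap κ⟦X⟧ _ e = v.hom x) (c : κ⸨X⸩) :
    algebraMap κ⟦X⟧ κ⸨X⸩ (taylorExpansion k t a) * (c ^ (r + 1) * (c + 1)) =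
        algebraMap κ⟦X⟧ κ⸨X⸩ (e ^ (r + 1)) ↔
      v.hom (algebraMap k[X] A a) * ((algebraMap _ _ c) ^ (r + 1) * (algebraMap _ _ c + 1)) =
        v.hom (x ^ (r + 1)) := by
  rw [← (algebraMap κ⸨X⸩ (AlgebraicClosure κ⸨X⸩)).injective.eq_iff, map_mul,
    ← IsScalarTower.algebraMap_apply, ← IsScalarTower.algebraMap_apply, v.hom_algebraMap, map_pow,
    map_pow, he]
  simp only [map_mul, map_pow, map_add, map_one]

variable {v}

theorem Isolates.existsUnique [IsAlgClosed A] (hx : v.Isolates K x) (hx0 : x ≠ 0) (hr : r ≠ 0)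
    (ha : Associated (taylorExpansion k t a) (PowerSeries.X ^ r)) :
    ∃! w, w ∈ v.laurentField K ∧ algebraMap k[X] A a * (w ^ (r + 1) * (w + 1)) = x ^ (r + 1) := by
  obtain ⟨e, he, hXe⟩ := hx 1
  rw [AlgEquiv.one_apply] at he hXe
  have he0 : e ≠ 0 := by
    rintro rfl
    exact hx0 (v.hom.injective (by rw [← he, map_zero, map_zero]))
  have ha0 : algebraMap k[X] A a ≠ 0 := fun h0 ↦ by
    have := v.hom_algebraMap a
    rw [h0, map_zero, eq_comm, map_eq_zero_iff _ (algebraMap_powerSeries_injective κ)] at this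
    exact pow_ne_zero r PowerSeries.X_ne_zero (ha.eq_zero_iff.1 this)
  obtain ⟨c, hc, huniq⟩ := existsUnique_mul_pow_mul_add_one_eq (C := κ⸨X⸩) PowerSeries.X_irreducible
    ha hr (hXe.2 rfl) he0
  obtain ⟨w, hwc, hw⟩ := exists_map_eq_of_mul_pow_mul_add_one_eq v.hom ha0 (x ^ (r + 1))
    ((v.mul_pow_mul_add_one_eq_iff he c).1 hc)
  refine ⟨w, ⟨⟨c, hwc.symm⟩, hw⟩, fun w' ⟨⟨c', hc'⟩, hw'⟩ ↦ v.hom.injective ?_⟩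
  rw [hwc, ← hc', huniq c' ((v.mul_pow_mul_add_one_eq_iff he c').2 _)]
  rw [hc', ← hw']
  simp only [map_mul, map_pow, map_add, map_one]

theorem Isolates.apply_eq (hx : v.Isolates K x) (hr : r ≠ 0)
    (ha : Associated (taylorExpansion k t a) (PowerSeries.X ^ r)) {σ : Gal(A/K)} {w : A}
    (hw : w ∈ v.laurentField K)
    (h : algebraMap k[X] A a * (w ^ (r + 1) * (w + 1)) = (σ x) ^ (r + 1)) : σ x = x := by
  obtain ⟨e, he, hXe⟩ := hx σ
  obtain ⟨c, hc⟩ := v.mem_laurentField.1 hw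
  by_contra hne
  have hu : IsUnit e := PowerSeries.isUnit_iff_constantCoeff.2 <| isUnit_iff_ne_zero.2 fun h0 ↦
    hne (hXe.1 (PowerSeries.X_dvd_iff.2 h0))
  refine mul_pow_mul_add_one_ne_of_isUnit PowerSeries.X_irreducible ha hr (hu.pow (r + 1)) c
    ((v.mul_pow_mul_add_one_eq_iff he c).2 ?_)
  rw [hc, ← h]
  simp only [map_mul, map_pow, map_add, map_one]

theorem minpoly_inv_eq_trinomial {Λ : IntermediateField K A} (hΛ : Λ ≤ v.laurentField K) {δ : Λ}
    {d : κ⟦X⟧} (hd : algebraMap κ⟦X⟧ _ d = v.hom δ) (hXd : PowerSeries.X ∣ d)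
    (hXd2 : ¬ PowerSeries.X ^ 2 ∣ d) {w : A} (hw : δ * (w ^ (r + 1) * (w + 1)) = (1 : A)) :
    minpoly Λ w⁻¹ = trinomial 0 1 (r + 2) (-δ) (-δ) 1 := by
  have hw0 : w ≠ 0 := by
    rintro rfl
    simp at hw
  have hneg : algebraMap κ⟦X⟧ _ (-d) = v.hom (-δ : Λ) := by
    rw [map_neg, hd, ← map_neg]
    rfl
  refine v.minpoly_eq_trinomial hΛ one_pos (by omega) hneg hneg (dvd_neg.2 hXd) (dvd_neg.2 hXd)
    (mt dvd_neg.1 hXd2) ?_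
  have hinv : (w ^ (r + 2))⁻¹ = δ * (1 + w⁻¹) := inv_eq_of_mul_eq_one_right <| by
    linear_combination hw + δ * w ^ (r + 1) * mul_inv_cancel₀ hw0
  simp only [trinomial_def, map_add, map_mul, map_pow, aeval_C, aeval_X, map_neg, map_one, inv_pow,
    hinv, IntermediateField.algebraMap_apply]
  ring

end TaylorEmbedding

end RigidExtension

section IsolatingPlaces

open Polynomial IntermediateField
open scoped PowerSeries LaurentSeries

variable {k κ K A : Type*} [Field k] [Field κ] [Algebra k κ] [Field K] [Field A]
  [Algebra k[X] K] [IsFractionRing k[X] K] [Algebra K A] [Algebra k[X] A] [IsScalarTower k[X] K A]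

theorem adjoin_one_sub_mul (b : A) {Y : k[X]} (hY : Y ≠ 0) :
    adjoin K {1 - algebraMap k[X] A Y * b} = adjoin K {b} := by
  rw [IsScalarTower.algebraMap_apply k[X] K A]
  have hY' : algebraMap K A (algebraMap k[X] K Y) ≠ 0 := by
    rwa [_root_.map_ne_zero, map_ne_zero_iff _ (IsFractionRing.injective k[X] K)]
  set y := algebraMap k[X] K Y
  refine le_antisymm (adjoin_simple_le_iff.2 ?_) (adjoin_simple_le_iff.2 ?_)
  · exact sub_mem (one_mem _) (mul_mem (_root_.algebraMap_mem _ y) (mem_adjoin_simple_self K b))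
  · have h := div_mem (sub_mem (one_mem _) (mem_adjoin_simple_self K (1 - algebraMap K A y * b)))
      (_root_.algebraMap_mem _ y)
    rwa [sub_sub_cancel, mul_div_cancel_left₀ b hY'] at h

variable [IsAlgClosure K A]

namespace TaylorEmbedding

variable {t : κ} {b : A} {Y : k[X]}

theorem algebraMap_one_sub_mul (v : TaylorEmbedding k A t) {z : A} {r : κ⟦X⟧}
    (hr : algebraMap κ⟦X⟧ _ r = v.hom z) :
    algebraMap κ⟦X⟧ _ (1 - taylorExpansion k t Y * r) = v.hom (1 - algebraMap k[X] A Y * z) := by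
  rw [map_sub, map_mul, hr, map_one, map_sub, map_mul, map_one, v.hom_algebraMap]

theorem isRoot_reduction_iff {P : k[X][X]} {z : κ} (hz : aeval t Y * z = 1) :
    ((P.map (taylorExpansion k t)).map PowerSeries.constantCoeff).IsRoot z ↔
      aeval t (P.reverse.eval Y) = 0 := by
  have hcomp : PowerSeries.constantCoeff.comp (taylorExpansion k t) =
      (aeval t : k[X] →ₐ[k] κ) := RingHom.ext (constantCoeff_taylorExpansion t)
  rw [Polynomial.map_map, IsRoot, eval_map, hcomp]
  exact (map_eval_reverse_eq_zero_iff (aeval t : k[X] →ₐ[k] κ).toRingHom P hz).symm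

theorem exists_algEquiv_algebraMap_eq (v : TaylorEmbedding k A t) (hb : IsIntegral k[X] b)
    {r : κ⟦X⟧} (hr : ((minpoly k[X] b).map (taylorExpansion k t)).IsRoot r) :
    ∃ σ : Gal(A/K), algebraMap κ⟦X⟧ _ r = v.hom (σ b) := by
  have : IsAlgClosed A := IsAlgClosure.isAlgClosed K
  obtain ⟨x, hx, hxr⟩ := v.exists_aeval_eq_zero (minpoly.monic hb) (y := algebraMap κ⟦X⟧ _ r) <| by
    rw [aeval_algebraMap_apply, coe_aeval_eq_eval, hr, map_zero]
  have hconj : IsConjRoot K b x := (isConjRoot_iff_aeval_eq_zero hb.tower_top).2 <| by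
    rwa [minpoly.isIntegrallyClosed_eq_field_fractions' K hb, aeval_map_algebraMap]
  obtain ⟨σ, rfl⟩ := isConjRoot_iff_exists_algEquiv.1 hconj.symm
  exact ⟨σ, hxr.symm⟩

theorem exists_isolates_one_sub_mul [IsAlgClosed κ] (hb : IsIntegral k[X] b)
    (hsep : (((minpoly k[X] b).map (taylorExpansion k t)).map PowerSeries.constantCoeff).Separable)
    (hY : aeval t Y ≠ 0) (hY0 : aeval t ((minpoly k[X] b).reverse.eval Y) = 0) :
    ∃ v : TaylorEmbedding k A t, v.Isolates K (1 - algebraMap k[X] A Y * b) := by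
  have hroot := (isRoot_reduction_iff (mul_inv_cancel₀ hY)).2 hY0
  have hder := hsep.eval₂_derivative_ne_zero (RingHom.id κ) hroot
  obtain ⟨r, hr, hrY⟩ := exists_isRoot_of_henselian PowerSeries.constantCoeff_surj
    ((minpoly.monic hb).map _) hroot hder
  obtain ⟨v₀⟩ := nonempty_of_isAlgClosure (k := k) (A := A) K t
  obtain ⟨τ, hτ⟩ := v₀.exists_algEquiv_algebraMap_eq (K := K) hb hr
  set v := v₀.comp (τ.toAlgHom.restrictScalars k[X])
  refine ⟨v, fun σ ↦ ?_⟩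
  have hσb : aeval (σ b) (minpoly k[X] b) = 0 := by
    rw [← AlgEquiv.coe_restrictScalars k[X] σ, aeval_algHom_apply, minpoly.aeval, map_zero]
  obtain ⟨s, hs⟩ := v.exists_algebraMap_eq (minpoly.monic hb) hsep hσb
  have hσx : σ (1 - algebraMap k[X] A Y * b) = 1 - algebraMap k[X] A Y * σ b := by
    rw [map_sub, map_one, map_mul, IsScalarTower.algebraMap_apply k[X] K A, σ.commutes]
  have hAY : algebraMap k[X] A Y ≠ 0 := fun h0 ↦ hY <| by
    have hTY : taylorExpansion k t Y = 0 :=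
      algebraMap_powerSeries_injective κ (by rw [← v.hom_algebraMap, h0, map_zero, map_zero])
    exact X_dvd_taylorExpansion_iff.1 (hTY ▸ dvd_zero _)
  have hsr : PowerSeries.constantCoeff s = PowerSeries.constantCoeff r ↔ s = r :=
    ⟨fun h ↦ (eq_of_isRoot_of_map_eq hr (v.isRoot_of_algebraMap_eq hσb hs) h.symm
      (hrY ▸ hder)).symm, congrArg _⟩
  refine ⟨_, by rw [hσx, v.algebraMap_one_sub_mul hs], ?_⟩
  rw [hσx, sub_right_inj, mul_right_inj' hAY, ← v.hom.injective.eq_iff, ← hs,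
    show v.hom b = _ from hτ.symm, (algebraMap_powerSeries_injective κ).eq_iff, ← hsr, hrY,
    PowerSeries.X_dvd_iff, map_sub, map_mul, map_one, constantCoeff_taylorExpansion, sub_eq_zero,
    eq_comm, mul_comm, mul_eq_one_iff_eq_inv₀ hY]

theorem exists_isUnit_algebraMap_eq_one_sub_mul [IsAlgClosed κ] (v : TaylorEmbedding k A t)
    (hb : IsIntegral k[X] b)
    (hsep : (((minpoly k[X] b).map (taylorExpansion k t)).map PowerSeries.constantCoeff).Separable)
    (hY0 : aeval t ((minpoly k[X] b).reverse.eval Y) ≠ 0) :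
    ∃ u, IsUnit u ∧ algebraMap κ⟦X⟧ _ u = v.hom (1 - algebraMap k[X] A Y * b) := by
  obtain ⟨r, hr⟩ := v.exists_algebraMap_eq (minpoly.monic hb) hsep (minpoly.aeval k[X] b)
  refine ⟨_, PowerSeries.isUnit_iff_constantCoeff.2 (isUnit_iff_ne_zero.2 fun h0 ↦ hY0 ?_),
    v.algebraMap_one_sub_mul hr⟩
  rw [map_sub, map_mul, map_one, constantCoeff_taylorExpansion, sub_eq_zero, eq_comm] at h0
  exact (isRoot_reduction_iff h0).1 ((v.isRoot_of_algebraMap_eq (minpoly.aeval k[X] b) hr).map)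

end TaylorEmbedding

variable (κ) in
theorem exists_isolates [IsAlgClosed κ] {F E : IntermediateField K A} (hFE : F ≤ E)
    [FiniteDimensional K E] [Algebra.IsSeparable K E] :
    ∃ (x : A) (a : k[X]) (t₀ t₁ : κ) (v₀ : TaylorEmbedding k A t₀) (v₁ : TaylorEmbedding k A t₁),
      adjoin K {x} = F ∧ E ≤ v₀.laurentField K ∧ E ≤ v₁.laurentField K ∧
      v₀.Isolates K x ∧ (∃ u, IsUnit u ∧ algebraMap κ⟦X⟧ _ u = v₁.hom x) ∧
      a ≠ 0 ∧ aeval t₀ a = 0 ∧ aeval t₁ a = 0 ∧ aeval t₁ (derivative a) ≠ 0 := by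
  have : FiniteDimensional K F :=
    .of_injective (inclusion hFE).toLinearMap (inclusion_injective hFE)
  have : Algebra.IsSeparable K F := .of_algHom K E (inclusion hFE)
  obtain ⟨b, hb0, hb, rfl⟩ := exists_isIntegral_adjoin_eq k[X] F
  have hbsep : IsSeparable K b := isSeparable_of_mem (hFE (mem_adjoin_simple_self K b))
  obtain ⟨D, hD, hE⟩ := exists_ne_zero_forall_le_laurentField (k := k) κ E
  obtain ⟨D', hD', hred⟩ := exists_ne_zero_forall_separable_reduction κ (minpoly.monic hb)
    (separable_map_minpoly hb hbsep)
  have h0 : (minpoly k[X] b).reverse.eval 0 = 1 := by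
    rw [← coeff_zero_eq_eval_zero, coeff_zero_reverse, minpoly.monic hb]
  have h1 : (minpoly k[X] b).reverse ≠ 1 := fun h ↦ by
    let _ := invertibleOfNonzero hb0
    have := (eval₂_reverse_eq_zero_iff (algebraMap k[X] A) b _).2 (minpoly.aeval k[X] b)
    rw [h, eval₂_one] at this
    exact one_ne_zero this
  obtain ⟨Y, t₀, ht₀, hY, hN₀, hN⟩ := exists_aeval_eval_eq_zero κ h0 h1 (mul_ne_zero hD hD')
  set N := (minpoly k[X] b).reverse.eval Y
  obtain ⟨q, hq, -, t₁, ht₁, hq₁, hq₁'⟩ := exists_prime_gt_aeval_X_pow_sub_one_eq_zero κ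
    (mul_ne_zero (mul_ne_zero hD hD') hN) 0
  simp only [map_mul, mul_ne_zero_iff] at ht₀ ht₁
  obtain ⟨v₀, hv₀⟩ := TaylorEmbedding.exists_isolates_one_sub_mul (K := K) hb (hred t₀ ht₀.2) hY hN₀
  obtain ⟨v₁⟩ := TaylorEmbedding.nonempty_of_isAlgClosure (k := k) (A := A) K t₁
  refine ⟨_, N * (X ^ q - 1), t₀, t₁, v₀, v₁, adjoin_one_sub_mul b fun hY0 ↦ hY ?_,
    hE t₀ ht₀.1 v₀, hE t₁ ht₁.1.1 v₁, hv₀,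
    v₁.exists_isUnit_algebraMap_eq_one_sub_mul hb (hred t₁ ht₁.1.2) ht₁.2,
    mul_ne_zero hN (monic_X_pow_sub_C 1 hq.ne_zero).ne_zero, ?_, ?_, ?_⟩
  · rw [hY0, map_zero]
  · rw [map_mul, hN₀, zero_mul]
  · rw [map_mul, hq₁, mul_zero]
  · rw [derivative_mul, map_add, map_mul, map_mul, hq₁, mul_zero, zero_add]
    exact mul_ne_zero ht₁.2 hq₁'

end IsolatingPlaces

section SurjectiveLift

open Polynomial IntermediateField
open scoped PowerSeries LaurentSeries

variable {k κ K A : Type*} [Field k] [Field κ] [Algebra k κ] [Field K] [Field A]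
  [Algebra k[X] K] [IsFractionRing k[X] K] [Algebra K A] [Algebra k[X] A] [IsScalarTower k[X] K A]
  {G : Type*} [Group G] {L : IntermediateField K A}

namespace TaylorEmbedding

variable {t : κ}

theorem exists_algebraMap_eq_div_pow (v : TaylorEmbedding k A t) {x : A} {u : κ⟦X⟧}
    (hu : IsUnit u) (hux : algebraMap κ⟦X⟧ _ u = v.hom x) {a : k[X]} (ha : aeval t a = 0)
    (ha' : aeval t (derivative a) ≠ 0) (n : ℕ) :
    ∃ d, algebraMap κ⟦X⟧ _ d = v.hom (algebraMap k[X] A a / x ^ n) ∧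
      PowerSeries.X ∣ d ∧ ¬ PowerSeries.X ^ 2 ∣ d := by
  obtain ⟨u, rfl⟩ := hu
  refine ⟨taylorExpansion k t a * (u⁻¹ ^ n : κ⟦X⟧ˣ), ?_, ?_, ?_⟩
  · have hx0 : v.hom x ≠ 0 := hux ▸ (u.isUnit.map _).ne_zero
    rw [map_div₀, map_pow, eq_div_iff (pow_ne_zero n hx0), v.hom_algebraMap, ← hux, ← map_pow,
      ← map_mul, mul_assoc, ← Units.val_pow_eq_pow_val, ← Units.val_mul, inv_pow, inv_mul_cancel,
      Units.val_one, mul_one]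
  · rwa [Units.dvd_mul_right, X_dvd_taylorExpansion_iff]
  · rw [Units.dvd_mul_right]
    exact not_X_sq_dvd_taylorExpansion ha'

theorem exists_isLift_of_mul_eq_one [IsAlgClosed κ] [IsAlgClosure K A] [Algebra k A]
    [IsScalarTower k k[X] A] [FiniteDimensional K L] [Algebra.IsSeparable K L]
    {v : TaylorEmbedding k A t} (hL : L ≤ v.laurentField K) (φ : G →* Gal(L/K))
    {δ : L} (hφδ : ∀ g, φ g δ = δ) {d : κ⟦X⟧} (hd : algebraMap κ⟦X⟧ _ d = v.hom δ)
    (hXd : PowerSeries.X ∣ d) (hXd2 : ¬ PowerSeries.X ^ 2 ∣ d) {w : A} {r : ℕ}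
    (hw : δ * (w ^ (r + 1) * (w + 1)) = (1 : A)) :
    ∃ hE : IsRegularExtension k L (L ⊔ adjoin K {w}),
      ∃ ψ : G →* Gal((L ⊔ adjoin K {w} : IntermediateField K A)/K), IsLift hE.le φ ψ ∧
        ∀ g (x : ({w} : Set A)), (ψ g ⟨x, mem_sup_adjoin x.2⟩ : A) = x := by
  have hδ : δ ≠ 0 := by
    rintro rfl
    simp at hw
  have hwsep : IsSeparable K w := by
    have h : IsSeparable K w⁻¹ := .of_algebra_isSeparable_of_isSeparable K <|
      isSeparable_of_minpoly_eq_trinomial (neg_ne_zero.2 hδ)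
        (Algebra.IsIntegral.isIntegral (R := K) w⁻¹).tower_top
        (v.minpoly_inv_eq_trinomial hL hd hXd hXd2 hw)
    have := (isSeparable_adjoin_simple_iff_isSeparable K A).2 h
    exact isSeparable_of_mem (inv_inv w ▸ inv_mem (mem_adjoin_simple_self K w⁻¹))
  refine exists_isRegularExtension_isLift (S := {w}) hL
    (fun x hx ↦ v.mem_laurentField_of_isAlgebraic hx) (forall_eq.2 hwsep) φ 1 fun g σ hσ ↦ ?_
  have hσw : δ * (σ w ^ (r + 1) * (σ w + 1)) = (1 : A) := by
    have := congrArg σ hw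
    rwa [map_mul, map_mul, map_pow, map_add, map_one, hσ, hφδ] at this
  obtain ⟨τ, hτ, hτw⟩ := exists_mem_fixingSubgroup_apply_eq <|
    (v.minpoly_inv_eq_trinomial (δ := ⟨δ, hL δ.2⟩) le_rfl hd hXd hXd2 hw).trans
      (v.minpoly_inv_eq_trinomial (δ := ⟨δ, hL δ.2⟩) le_rfl hd hXd hXd2 hσw).symm
  refine ⟨τ, hτ, ?_⟩
  rintro ⟨_, rfl⟩
  simpa using hτw

variable {v : TaylorEmbedding k A t}

theorem Isolates.apply_eq_of_map_le [IsAlgClosed A] {x : A} (hx : v.Isolates K x) (hx0 : x ≠ 0)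
    {r : ℕ} (hr : r ≠ 0) {a : k[X]} (ha : Associated (taylorExpansion k t a) (PowerSeries.X ^ r))
    (hL : L ≤ v.laurentField K) {w : A} (hwv : w ∈ v.laurentField K)
    (hw : algebraMap k[X] A a * (w ^ (r + 1) * (w + 1)) = x ^ (r + 1)) {σ : Gal(A/K)}
    (hσ : (L ⊔ adjoin K {w}).map σ.toAlgHom ≤ L ⊔ adjoin K {w}) : σ x = x ∧ σ w = w := by
  have hσv : σ w ∈ v.laurentField K := sup_le hL (adjoin_simple_le_iff.2 hwv) <|
    hσ ⟨w, mem_sup_adjoin rfl, rfl⟩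
  have hσw : algebraMap k[X] A a * (σ w ^ (r + 1) * (σ w + 1)) = σ x ^ (r + 1) := by
    have := congrArg σ hw
    rwa [map_mul, map_mul, map_pow, map_pow, map_add, map_one,
      IsScalarTower.algebraMap_apply k[X] K A, σ.commutes,
      ← IsScalarTower.algebraMap_apply k[X] K A] at this
  have hσx : σ x = x := hx.apply_eq hr ha hσv hσw
  rw [hσx] at hσw
  exact ⟨hσx, (hx.existsUnique hx0 hr ha).unique ⟨hσv, hσw⟩ ⟨hwv, hw⟩⟩

end TaylorEmbedding

variable [IsAlgClosure K A] [Algebra k A] [IsScalarTower k k[X] A] [FiniteDimensional K L]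
  [Algebra.IsSeparable K L]

theorem exists_bijective_isLift {φ : G →* Gal(L/K)} (hφ : Function.Injective φ) :
    ∃ (E : IntermediateField K A) (hE : IsRegularExtension k L E) (ψ : G →* Gal(E/K)),
      IsLift hE.le φ ψ ∧ Function.Bijective ψ := by
  have : IsAlgClosed A := IsAlgClosure.isAlgClosed K
  let F := lift (fixedField φ.range)
  have hFφ {y : L} : (y : A) ∈ F ↔ ∀ g, φ g y = y := by
    rw [mem_lift, mem_fixedField_iff]
    exact Set.forall_mem_range
  have hFL : F ≤ L := lift_le _
  obtain ⟨x, a, t₀, t₁, v₀, v₁, hxF, hL₀, hL₁, hx, ⟨u, hu, hux⟩, ha, ha₀, ha₁, ha₁'⟩ :=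
    exists_isolates (k := k) (AlgebraicClosure k) hFL
  have hx0 : x ≠ 0 := by
    rintro rfl
    exact (hu.map (algebraMap _ _)).ne_zero (hux.trans (map_zero v₁.hom))
  have hxF' : x ∈ F := hxF ▸ mem_adjoin_simple_self K x
  obtain ⟨r, hr, har⟩ := exists_associated_taylorExpansion_X_pow ha ha₀
  obtain ⟨w, ⟨hwv, hw⟩, -⟩ := hx.existsUnique hx0 hr har
  obtain ⟨d, hd, hXd, hXd2⟩ := v₁.exists_algebraMap_eq_div_pow hu hux ha₁ ha₁' (r + 1)
  have hδF : algebraMap k[X] A a / x ^ (r + 1) ∈ F := by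
    rw [IsScalarTower.algebraMap_apply k[X] K A]
    exact div_mem (F.algebraMap_mem _) (pow_mem hxF' _)
  obtain ⟨hE, ψ, hψ, hψw⟩ := v₁.exists_isLift_of_mul_eq_one hL₁ φ (δ := ⟨_, hFL hδF⟩)
    (hFφ.1 hδF) hd hXd hXd2 (w := w) (r := r) <| by
      rw [div_mul_eq_mul_div, hw, div_self (pow_ne_zero _ hx0)]
  refine ⟨_, hE, ψ, hψ, hψ.injective hφ, surjective_of_forall_fixed hψ hψw fun σ hσ ↦ ?_⟩
  obtain ⟨hσx, hσw⟩ := hx.apply_eq_of_map_le hx0 hr har hL₀ hwv hw hσ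
  refine ⟨fun y hy ↦ ?_, forall_eq.2 hσw⟩
  have hyF : (y : A) ∈ adjoin K {x} := hxF ▸ hFφ.2 hy
  exact (forall_mem_adjoin_smul_eq_self_iff K σ).2 (forall_eq.2 hσx) y hyF

theorem statement_0_general [Finite G] (α : G →* Gal(L/K)) :
    ∃ (E : IntermediateField K A) (hE : IsRegularExtension k L E) (β : Gal(E/K) ≃* G),
      ∀ σ x, σ (inclusion hE.le x) = inclusion hE.le (α (β σ) x) := by
  obtain ⟨E₁, hE₁, φ, hφ, hφinj⟩ := exists_injective_isLift (k := k) α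
  have := hE₁.finiteDimensional
  have := hE₁.isSeparable
  obtain ⟨E, hE, ψ, hψ, hψbij⟩ := exists_bijective_isLift (k := k) hφinj
  let β := MulEquiv.ofBijective ψ hψbij
  refine ⟨E, hE₁.trans hE, β.symm, fun σ x ↦ ?_⟩
  rw [← hφ.trans hψ]
  exact congr($(β.apply_symm_apply σ) _).symm

end SurjectiveLift

/-- **Every finite embedding problem over k(T) has a regular solution.**
Here `L` is a finite separable extension of `k(T) = RatFunc k` inside a fixed algebraic
closure, `α : G → Aut(L/k(T))` is surjective, and we find a finite separable extension
`E/k(T)` with `L ⊆ E`, such that every element of `E` algebraic over `k` lies in `L`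
(regularity: `E ∩ k̄ = L ∩ k̄`), together with an isomorphism
`β : Aut(E/k(T)) ≃ G` so that every `σ ∈ Aut(E/k(T))` maps `L` onto itself and
`σ|_L = α (β σ)`. -/
theorem statement_0 (k : Type) [Field k] (G : Type) [Group G] [Finite G]
    (L : IntermediateField (RatFunc k) (AlgebraicClosure (RatFunc k)))
    [FiniteDimensional (RatFunc k) L] [Algebra.IsSeparable (RatFunc k) L]
    (α : G →* (L ≃ₐ[RatFunc k] L)) (hα : Function.Surjective α) :
    ∃ (E : IntermediateField (RatFunc k) (AlgebraicClosure (RatFunc k)))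
      (hLE : L ≤ E),
      FiniteDimensional (RatFunc k) E ∧ Algebra.IsSeparable (RatFunc k) E ∧
      (∀ x : AlgebraicClosure (RatFunc k), x ∈ E → IsAlgebraic k x → x ∈ L) ∧
      ∃ β : (E ≃ₐ[RatFunc k] E) ≃* G,
        ∀ (σ : E ≃ₐ[RatFunc k] E) (x : AlgebraicClosure (RatFunc k)) (hx : x ∈ L),
          ((σ ⟨x, hLE hx⟩ : E) : AlgebraicClosure (RatFunc k)) =
            ((α (β σ) ⟨x, hx⟩ : L) : AlgebraicClosure (RatFunc k)) := by
  obtain ⟨E, hE, β, hβ⟩ := statement_0_general (k := k) α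
  exact ⟨E, hE.le, hE.finiteDimensional, hE.isSeparable, hE.mem_of_isAlgebraic, β,
    fun σ x hx ↦ congrArg Subtype.val (hβ σ ⟨x, hx⟩)⟩
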